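/- Let L > 0 and fix feedback gains α, β with 0 < |α| < 1 and β > 0. There exist constants κ > 0 and θ > 0, depending only on L, α and β, such that every classical solution u of the closed-loop linear KP-II system on [0,L]² × [0,∞) satisfies E(t) ≤ κ · E(0) · e^{−2θt} for all t > 0. -/

import Mathlib

open MeasureTheory Real

noncomputable section

/-- Partial derivative in `x` of `u(x,y,t)`. -/
def pdx (u : ℝ → ℝ → ℝ → ℝ) (x y t : ℝ) : ℝ := deriv (fun x' => u x' y t) x

/-- Third partial derivative in `x` of `u(x,y,t)`. -/
def pdx3 (u : ℝ → ℝ → ℝ → ℝ) (x y t : ℝ) : ℝ := iteratedDeriv 3 (fun x' => u x' y t) x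

/-- Partial derivative in `y` of `u(x,y,t)`. -/
def pdy (u : ℝ → ℝ → ℝ → ℝ) (x y t : ℝ) : ℝ := deriv (fun y' => u x y' t) y

/-- Second partial derivative in `y` of `u(x,y,t)`. -/
def pdy2 (u : ℝ → ℝ → ℝ → ℝ) (x y t : ℝ) : ℝ := iteratedDeriv 2 (fun y' => u x y' t) y

/-- Partial derivative in `t` of `u(x,y,t)`. -/
def pdt (u : ℝ → ℝ → ℝ → ℝ) (x y t : ℝ) : ℝ := deriv (fun t' => u x y t') t

/-- The nonlocal operator `(∂ₓ⁻¹ w)(x,y) = -∫ₓ^L w(s,y) ds`. -/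
def pxInv (L : ℝ) (w : ℝ → ℝ → ℝ) (x y : ℝ) : ℝ := -(∫ s in x..L, w s y)

/-- A classical solution of the closed-loop linear KP-II system on `[0,L]² × [0,∞)`:
`u` is `C³`, satisfies `u_t + u_x + u_xxx + ∂ₓ⁻¹ u_yy = 0` on `Ω × (0,∞)` and the
boundary feedback conditions for all `t ≥ 0`. -/
def IsKPSolutionInf (L α β : ℝ) (u : ℝ → ℝ → ℝ → ℝ) : Prop :=
  ContDiff ℝ 3 (fun p : ℝ × ℝ × ℝ => u p.1 p.2.1 p.2.2) ∧
  (∀ x ∈ Set.Ioo (0:ℝ) L, ∀ y ∈ Set.Ioo (0:ℝ) L, ∀ t ∈ Set.Ioi (0:ℝ),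
      pdt u x y t + pdx u x y t + pdx3 u x y t
        + pxInv L (fun s y' => pdy2 u s y' t) x y = 0) ∧
  (∀ y ∈ Set.Icc (0:ℝ) L, ∀ t ∈ Set.Ici (0:ℝ),
      u 0 y t = 0 ∧ u L y t = 0 ∧ pdx u L y t = α * pdx u 0 y t) ∧
  (∀ x ∈ Set.Icc (0:ℝ) L, ∀ t ∈ Set.Ici (0:ℝ),
      pdy u x L t = β * pdx u x L t ∧ pdy u x 0 t = 0)

/-- The energy `E(t) = ½ ∫_Ω u(x,y,t)² dx dy`. -/
def energy (L : ℝ) (u : ℝ → ℝ → ℝ → ℝ) (t : ℝ) : ℝ :=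
  (1/2) * ∫ x in (0:ℝ)..L, ∫ y in (0:ℝ)..L, (u x y t)^2

open Function in
/-- Differentiation under the integral sign for jointly continuous data on a compact interval. -/
theorem hasDerivAt_intervalIntegral_param {f f' : ℝ → ℝ → ℝ} (hf : Continuous (uncurry f))
    (hf' : Continuous (uncurry f')) (h : ∀ y s, HasDerivAt (fun y => f y s) (f' y s) y)
    (a b y : ℝ) :
    HasDerivAt (fun y => ∫ s in a..b, f y s) (∫ s in a..b, f' y s) y := by
  have hc : IsCompact (Set.Icc (y - 1) (y + 1) ×ˢ Set.uIcc a b) := isCompact_Icc.prod isCompact_uIcc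
  obtain ⟨M, hM⟩ := hc.exists_bound_of_continuousOn (f := uncurry f') hf'.continuousOn
  refine (intervalIntegral.hasDerivAt_integral_of_dominated_loc_of_deriv_le
    (bound := fun _ => M) (s := Set.Icc (y - 1) (y + 1)) (F := f) (F' := f')
    (Icc_mem_nhds (by linarith) (by linarith)) ?_ ?_ ?_ ?_ ?_ ?_).2
  · exact Filter.Eventually.of_forall fun x =>
      (show Continuous (f x) by fun_prop).aestronglyMeasurable
  · exact (show Continuous (f y) by fun_prop).intervalIntegrable _ _
  · exact (show Continuous (f' y) by fun_prop).aestronglyMeasurable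
  · exact Filter.Eventually.of_forall fun t ht x hx => hM (x, t) ⟨hx, Set.uIoc_subset_uIcc ht⟩
  · exact intervalIntegrable_const
  · exact Filter.Eventually.of_forall fun t _ x _ => h x t

open Function in
/-- Fubini for continuous functions on rectangles. -/
theorem intervalIntegral_swap_of_continuous {f : ℝ → ℝ → ℝ} (hf : Continuous (uncurry f))
    (a b c d : ℝ) :
    ∫ x in a..b, ∫ y in c..d, f x y = ∫ y in c..d, ∫ x in a..b, f x y := by
  refine intervalIntegral_intervalIntegral_swap ?_
  refine (hf.continuousOn.integrableOn_compact
    (isCompact_uIcc.prod isCompact_uIcc : IsCompact (Set.uIcc a b ×ˢ Set.uIcc c d))).mono_set ?_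
  exact Set.prod_mono Set.uIoc_subset_uIcc Set.uIoc_subset_uIcc

/-- The integral of `f` over the square `(0,L)²`. -/
def squareInt (L : ℝ) (f : ℝ → ℝ → ℝ) : ℝ := ∫ x in (0:ℝ)..L, ∫ y in (0:ℝ)..L, f x y

/-- The primitive in the first variable vanishing at `0`. -/
def primX (f : ℝ → ℝ → ℝ) (x y : ℝ) : ℝ := ∫ s in (0:ℝ)..x, f s y

/-- The primitive in the first variable vanishing at `L`. -/
def tailX (L : ℝ) (f : ℝ → ℝ → ℝ) (x y : ℝ) : ℝ := primX f x y - primX f L y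

section Primitives

open Function

variable {f g f' g' : ℝ → ℝ → ℝ} {L : ℝ}

@[fun_prop]
theorem Continuous.primX {X : Type*} [TopologicalSpace X]
    {a b : X → ℝ} (hf : Continuous (uncurry f)) (ha : Continuous a)
    (hb : Continuous b) : Continuous fun q => primX f (a q) (b q) := by
  have h : Continuous (fun q : ℝ × ℝ => ∫ s in (0:ℝ)..q.1, f s q.2) := by fun_prop
  exact h.comp (ha.prodMk hb)

@[fun_prop]
theorem Continuous.tailX {X : Type*} [TopologicalSpace X]
    {a b : X → ℝ} (hf : Continuous (uncurry f)) (ha : Continuous a)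
    (hb : Continuous b) : Continuous fun q => tailX L f (a q) (b q) := by
  unfold _root_.tailX
  fun_prop

theorem primX_zero (y : ℝ) : primX f 0 y = 0 := by simp [primX]

theorem tailX_right (y : ℝ) : tailX L f L y = 0 := by simp [tailX]

theorem tailX_eq_neg_integral (hf : Continuous (uncurry f)) (x y : ℝ) :
    tailX L f x y = -∫ s in x..L, f s y := by
  have h : Continuous fun s => f s y := by fun_prop
  rw [tailX, primX, primX, ← intervalIntegral.integral_add_adjacent_intervals
    (h.intervalIntegrable 0 x) (h.intervalIntegrable x L)]
  ring

theorem hasDerivAt_primX (hf : Continuous (uncurry f)) (x y : ℝ) :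
    HasDerivAt (fun x => primX f x y) (f x y) x := by
  have h : Continuous fun s => f s y := by fun_prop
  exact intervalIntegral.integral_hasDerivAt_right (h.intervalIntegrable _ _)
    (h.stronglyMeasurableAtFilter _ _) h.continuousAt

theorem hasDerivAt_tailX (hf : Continuous (uncurry f)) (x y : ℝ) :
    HasDerivAt (fun x => tailX L f x y) (f x y) x :=
  (hasDerivAt_primX hf x y).sub_const _

theorem hasDerivAt_primX_param (hf : Continuous (uncurry f)) (hf' : Continuous (uncurry f'))
    (h : ∀ x y, HasDerivAt (fun y => f x y) (f' x y) y) (x y : ℝ) :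
    HasDerivAt (fun y => primX f x y) (primX f' x y) y :=
  hasDerivAt_intervalIntegral_param (f := fun y s => f s y) (f' := fun y s => f' s y)
    (by fun_prop) (by fun_prop) (fun y s => h s y) 0 x y

theorem hasDerivAt_tailX_param (hf : Continuous (uncurry f)) (hf' : Continuous (uncurry f'))
    (h : ∀ x y, HasDerivAt (fun y => f x y) (f' x y) y) (x y : ℝ) :
    HasDerivAt (fun y => tailX L f x y) (tailX L f' x y) y :=
  (hasDerivAt_primX_param hf hf' h x y).sub (hasDerivAt_primX_param hf hf' h L y)

theorem abs_primX_le {M y : ℝ} (h : ∀ s ∈ Set.Icc 0 L, |f s y| ≤ M) {x : ℝ}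
    (hx : x ∈ Set.Icc 0 L) : |primX f x y| ≤ L * M := by
  have hM : 0 ≤ M := (abs_nonneg _).trans (h x hx)
  have := intervalIntegral.norm_integral_le_of_norm_le_const (a := 0) (b := x)
    (f := fun s => f s y) (C := M) (fun s hs => h s (by
      rw [Set.uIoc_of_le hx.1] at hs
      exact ⟨hs.1.le, hs.2.trans hx.2⟩))
  rw [Real.norm_eq_abs, sub_zero, abs_of_nonneg hx.1] at this
  calc |primX f x y| ≤ M * x := this
    _ ≤ L * M := by nlinarith [hx.2]

theorem sq_primX_le (hf : Continuous (uncurry f)) (y : ℝ) {x : ℝ} (hx : x ∈ Set.Icc 0 L) :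
    primX f x y ^ 2 ≤ L * ∫ s in (0:ℝ)..L, f s y ^ 2 := by
  have hc : Continuous fun s => f s y := by fun_prop
  set m := primX f x y with hm
  set Q := ∫ s in (0:ℝ)..x, f s y ^ 2 with hQ
  have hQL : Q ≤ ∫ s in (0:ℝ)..L, f s y ^ 2 :=
    intervalIntegral.integral_mono_interval le_rfl hx.1 hx.2
      (Filter.Eventually.of_forall fun s => sq_nonneg _) ((hc.pow 2).intervalIntegrable _ _)
  have hQ0 : 0 ≤ Q := intervalIntegral.integral_nonneg hx.1 fun s _ => sq_nonneg _
  have key : 0 ≤ x ^ 2 * Q - 2 * x * m * m + m ^ 2 * x := by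
    have h0 : 0 ≤ ∫ s in (0:ℝ)..x, (x * f s y - m) ^ 2 :=
      intervalIntegral.integral_nonneg hx.1 fun s _ => sq_nonneg _
    have h1 : ∫ s in (0:ℝ)..x, (x * f s y - m) ^ 2
        = ∫ s in (0:ℝ)..x, ((x ^ 2 * f s y ^ 2 - 2 * x * m * f s y) + m ^ 2) := by
      congr 1; ext s; ring
    rw [h1, intervalIntegral.integral_add, intervalIntegral.integral_sub,
      intervalIntegral.integral_const_mul, intervalIntegral.integral_const_mul,
      intervalIntegral.integral_const] at h0
    · have h2 : ∫ s in (0:ℝ)..x, f s y = m := rfl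
      rw [h2, smul_eq_mul, sub_zero] at h0
      linarith
    all_goals exact Continuous.intervalIntegrable (by fun_prop) _ _
  rcases hx.1.eq_or_lt with h0 | h0
  · have : m = 0 := by rw [hm, ← h0, primX_zero]
    rw [this]
    have : 0 ≤ L := hx.1.trans hx.2
    have := hQ0.trans hQL
    simpa using mul_nonneg ‹0 ≤ L› this
  · have h3 : m ^ 2 ≤ x * Q := by
      have : 0 ≤ x * (x * Q - m ^ 2) := by linarith
      have := nonneg_of_mul_nonneg_right this h0
      linarith
    calc m ^ 2 ≤ x * Q := h3
      _ ≤ L * Q := mul_le_mul_of_nonneg_right hx.2 hQ0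
      _ ≤ _ := mul_le_mul_of_nonneg_left hQL (hx.1.trans hx.2)

end Primitives

section SquareIntegral

open Function

variable {f g G G₁ G₂ : ℝ → ℝ → ℝ} {L : ℝ}

theorem squareInt_add (hf : Continuous (uncurry f)) (hg : Continuous (uncurry g)) :
    squareInt L (fun x y => f x y + g x y) = squareInt L f + squareInt L g := by
  unfold squareInt
  rw [← intervalIntegral.integral_add]
  · congr 1
    ext x
    exact intervalIntegral.integral_add (Continuous.intervalIntegrable (by fun_prop) _ _)
      (Continuous.intervalIntegrable (by fun_prop) _ _)
  all_goals exact Continuous.intervalIntegrable (by fun_prop) _ _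

theorem squareInt_const_mul (c : ℝ) :
    squareInt L (fun x y => c * f x y) = c * squareInt L f := by
  simp [squareInt]

theorem squareInt_sub (hf : Continuous (uncurry f)) (hg : Continuous (uncurry g)) :
    squareInt L (fun x y => f x y - g x y) = squareInt L f - squareInt L g := by
  have := squareInt_add (L := L) hf (g := fun x y => -1 * g x y) (by fun_prop)
  rw [squareInt_const_mul] at this
  rw [sub_eq_add_neg, ← neg_one_mul, ← this]
  congr 1; ext x y; ring

theorem squareInt_mono (hL : 0 ≤ L) (hf : Continuous (uncurry f)) (hg : Continuous (uncurry g))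
    (h : ∀ x ∈ Set.Icc 0 L, ∀ y ∈ Set.Icc 0 L, f x y ≤ g x y) :
    squareInt L f ≤ squareInt L g :=
  intervalIntegral.integral_mono_on hL (Continuous.intervalIntegrable (by fun_prop) _ _)
    (Continuous.intervalIntegrable (by fun_prop) _ _) fun x hx =>
    intervalIntegral.integral_mono_on hL (Continuous.intervalIntegrable (by fun_prop) _ _)
      (Continuous.intervalIntegrable (by fun_prop) _ _) fun y hy => h x hx y hy

theorem squareInt_congr (hL : 0 ≤ L) (h : ∀ x ∈ Set.Icc 0 L, ∀ y ∈ Set.Icc 0 L, f x y = g x y) :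
    squareInt L f = squareInt L g := by
  refine intervalIntegral.integral_congr fun x hx => intervalIntegral.integral_congr fun y hy => ?_
  rw [Set.uIcc_of_le hL] at hx hy
  exact h x hx y hy

theorem squareInt_nonneg (hL : 0 ≤ L) (h : ∀ x y, 0 ≤ f x y) : 0 ≤ squareInt L f :=
  intervalIntegral.integral_nonneg hL fun x _ =>
    intervalIntegral.integral_nonneg hL fun y _ => h x y

theorem squareInt_swap (hf : Continuous (uncurry f)) :
    squareInt L f = ∫ y in (0:ℝ)..L, ∫ x in (0:ℝ)..L, f x y :=
  intervalIntegral_swap_of_continuous hf _ _ _ _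

/-- The divergence theorem on the square. -/
theorem squareInt_divergence {g₁ g₂ : ℝ → ℝ → ℝ} (hg₁ : Continuous (uncurry g₁))
    (hg₂ : Continuous (uncurry g₂)) (h₁ : ∀ x y, HasDerivAt (fun x => G₁ x y) (g₁ x y) x)
    (h₂ : ∀ x y, HasDerivAt (fun y => G₂ x y) (g₂ x y) y) :
    squareInt L (fun x y => g₁ x y + g₂ x y)
      = (∫ y in (0:ℝ)..L, (G₁ L y - G₁ 0 y)) + ∫ x in (0:ℝ)..L, (G₂ x L - G₂ x 0) := by
  rw [squareInt_add hg₁ hg₂, squareInt_swap hg₁]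
  congr 1
  · congr 1; ext y
    exact intervalIntegral.integral_eq_sub_of_hasDerivAt (fun x _ => h₁ x y)
      (Continuous.intervalIntegrable (by fun_prop) _ _)
  · unfold squareInt
    congr 1; ext x
    exact intervalIntegral.integral_eq_sub_of_hasDerivAt (fun y _ => h₂ x y)
      (Continuous.intervalIntegrable (by fun_prop) _ _)

/-- Pointwise bounds by a function of `y` alone integrate over the square. -/
theorem squareInt_le_of_le_integral {b : ℝ → ℝ} (hL : 0 ≤ L) (hf : Continuous (uncurry f))
    (hb : Continuous b) (h : ∀ x ∈ Set.Icc 0 L, ∀ y ∈ Set.Icc 0 L, f x y ≤ b y) :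
    squareInt L f ≤ L * ∫ y in (0:ℝ)..L, b y := by
  refine (squareInt_mono hL hf (g := fun _ y => b y) (by fun_prop) h).trans_eq ?_
  simp [squareInt]

end SquareIntegral

/-- A spatial profile satisfying the boundary conditions of the closed-loop system, together with
the partial derivatives entering the equation. -/
structure KPProfile (L α β : ℝ) where
  p : ℝ → ℝ → ℝ
  px : ℝ → ℝ → ℝ
  pxx : ℝ → ℝ → ℝ
  pxxx : ℝ → ℝ → ℝ
  py : ℝ → ℝ → ℝ
  pyy : ℝ → ℝ → ℝ
  cont_p : Continuous (Function.uncurry p)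
  cont_px : Continuous (Function.uncurry px)
  cont_pxxx : Continuous (Function.uncurry pxxx)
  cont_py : Continuous (Function.uncurry py)
  cont_pyy : Continuous (Function.uncurry pyy)
  deriv_p : ∀ x y, HasDerivAt (fun x => p x y) (px x y) x
  deriv_px : ∀ x y, HasDerivAt (fun x => px x y) (pxx x y) x
  deriv_pxx : ∀ x y, HasDerivAt (fun x => pxx x y) (pxxx x y) x
  deriv_p_y : ∀ x y, HasDerivAt (fun y => p x y) (py x y) y
  deriv_py : ∀ x y, HasDerivAt (fun y => py x y) (pyy x y) y
  left : ∀ y ∈ Set.Icc 0 L, p 0 y = 0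
  right : ∀ y ∈ Set.Icc 0 L, p L y = 0
  slope : ∀ y ∈ Set.Icc 0 L, px L y = α * px 0 y
  top : ∀ x ∈ Set.Icc 0 L, py x L = β * px x L
  bottom : ∀ x ∈ Set.Icc 0 L, py x 0 = 0

namespace KPProfile

open Function

variable {L α β : ℝ} (P Q : KPProfile L α β)

section Continuity

variable {X : Type*} [TopologicalSpace X] {a b : X → ℝ}

@[fun_prop]
theorem continuous_p (ha : Continuous a) (hb : Continuous b) :
    Continuous fun q => P.p (a q) (b q) := P.cont_p.comp (ha.prodMk hb)

@[fun_prop]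
theorem continuous_px (ha : Continuous a) (hb : Continuous b) :
    Continuous fun q => P.px (a q) (b q) := P.cont_px.comp (ha.prodMk hb)

@[fun_prop]
theorem continuous_pxxx (ha : Continuous a) (hb : Continuous b) :
    Continuous fun q => P.pxxx (a q) (b q) := P.cont_pxxx.comp (ha.prodMk hb)

@[fun_prop]
theorem continuous_py (ha : Continuous a) (hb : Continuous b) :
    Continuous fun q => P.py (a q) (b q) := P.cont_py.comp (ha.prodMk hb)

@[fun_prop]
theorem continuous_pyy (ha : Continuous a) (hb : Continuous b) :
    Continuous fun q => P.pyy (a q) (b q) := P.cont_pyy.comp (ha.prodMk hb)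

/-- The profile `∂ₓ⁻¹ p_y`. -/
def z : ℝ → ℝ → ℝ := tailX L P.py

/-- The profile `∂ₓ⁻¹ p_yy`. -/
def zy : ℝ → ℝ → ℝ := tailX L P.pyy

/-- The spatial operator `p_x + p_xxx + ∂ₓ⁻¹ p_yy`. -/
def op (x y : ℝ) : ℝ := P.px x y + P.pxxx x y + P.zy x y

@[fun_prop]
theorem continuous_z (ha : Continuous a) (hb : Continuous b) :
    Continuous fun q => P.z (a q) (b q) := by
  unfold z
  fun_prop

@[fun_prop]
theorem continuous_zy (ha : Continuous a) (hb : Continuous b) :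
    Continuous fun q => P.zy (a q) (b q) := by
  unfold zy
  fun_prop

@[fun_prop]
theorem continuous_op (ha : Continuous a) (hb : Continuous b) :
    Continuous fun q => P.op (a q) (b q) := by
  unfold op
  fun_prop

end Continuity

theorem deriv_z (x y : ℝ) : HasDerivAt (fun x => P.z x y) (P.py x y) x :=
  hasDerivAt_tailX P.cont_py x y

theorem deriv_z_y (x y : ℝ) : HasDerivAt (fun y => P.z x y) (P.zy x y) y :=
  hasDerivAt_tailX_param P.cont_py P.cont_pyy P.deriv_py x y

theorem z_right (y : ℝ) : P.z L y = 0 := tailX_right y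

theorem z_bottom {x : ℝ} (hx : x ∈ Set.Icc 0 L) : P.z x 0 = 0 := by
  rw [z, tailX_eq_neg_integral P.cont_py, intervalIntegral.integral_congr (g := fun _ => (0:ℝ))]
  · simp
  · intro s hs
    rw [Set.uIcc_of_le hx.2] at hs
    exact P.bottom s ⟨hx.1.trans hs.1, hs.2⟩

theorem z_top {x : ℝ} (hx : x ∈ Set.Icc 0 L) : P.z x L = β * P.p x L := by
  have hL : 0 ≤ L := hx.1.trans hx.2
  rw [z, tailX_eq_neg_integral P.cont_py,
    intervalIntegral.integral_congr (g := fun s => β * P.px s L),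
    intervalIntegral.integral_const_mul,
    intervalIntegral.integral_eq_sub_of_hasDerivAt (fun s _ => P.deriv_p s L)
      (Continuous.intervalIntegrable (by fun_prop) _ _), P.right L ⟨hL, le_rfl⟩]
  · ring
  · intro s hs
    rw [Set.uIcc_of_le hx.2] at hs
    exact P.top s ⟨hx.1.trans hs.1, hs.2⟩

/-- The squared `L²` norm of the profile. -/
def mass : ℝ := squareInt L fun x y => P.p x y ^ 2

/-- The squared `L²` norm of `p_x`. -/
def massX : ℝ := squareInt L fun x y => P.px x y ^ 2

/-- The squared `L²` norm of `∂ₓ⁻¹ p_y`. -/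
def massZ : ℝ := squareInt L fun x y => P.z x y ^ 2

/-- The squared norm of the trace of `p_x` at `x = 0`. -/
def slopeTrace : ℝ := ∫ y in (0:ℝ)..L, P.px 0 y ^ 2

/-- The squared norm of the trace of `p` at `y = L`. -/
def topTrace : ℝ := ∫ x in (0:ℝ)..L, P.p x L ^ 2

/-- The squared norm of the trace of `∂ₓ⁻¹ p_y` at `x = 0`. -/
def fluxTrace : ℝ := ∫ y in (0:ℝ)..L, P.z 0 y ^ 2

theorem weighted_energy_identity (hL : 0 ≤ L) (a b : ℝ) :
    squareInt L (fun x y => P.op x y * ((a + b * x) * P.p x y))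
      = -(b / 2) * P.mass + 3 / 2 * b * P.massX + b / 2 * P.massZ
        + (a - (a + b * L) * α ^ 2) / 2 * P.slopeTrace + a / 2 * P.fluxTrace
        + β * ∫ x in (0:ℝ)..L, (a + b * x) * P.p x L ^ 2 := by
  have div := squareInt_divergence (L := L)
    (G₁ := fun x y => (a + b * x) * P.p x y ^ 2 / 2 + (a + b * x) * P.p x y * P.pxx x y
      - (a + b * x) * P.px x y ^ 2 / 2 - b * P.p x y * P.px x y - (a + b * x) * P.z x y ^ 2 / 2)
    (g₁ := fun x y => (a + b * x) * P.p x y * (P.px x y + P.pxxx x y) + b / 2 * P.p x y ^ 2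
      - 3 / 2 * b * P.px x y ^ 2 - b / 2 * P.z x y ^ 2 - (a + b * x) * P.z x y * P.py x y)
    (G₂ := fun x y => (a + b * x) * P.p x y * P.z x y)
    (g₂ := fun x y => (a + b * x) * (P.py x y * P.z x y + P.p x y * P.zy x y))
    (by fun_prop) (by fun_prop)
    (fun x y => by
      have hw : HasDerivAt (fun x : ℝ => a + b * x) b x := by
        simpa using ((hasDerivAt_id x).const_mul b).const_add a
      refine HasDerivAt.congr_deriv ((((((hw.mul ((P.deriv_p x y).pow 2)).div_const 2).add
        ((hw.mul (P.deriv_p x y)).mul (P.deriv_pxx x y))).sub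
        ((hw.mul ((P.deriv_px x y).pow 2)).div_const 2)).sub
        (((P.deriv_p x y).const_mul b).mul (P.deriv_px x y))).sub
        ((hw.mul ((P.deriv_z x y).pow 2)).div_const 2)) ?_
      simp
      ring)
    (fun x y => by
      refine (((P.deriv_p_y x y).const_mul (a + b * x)).mul (P.deriv_z_y x y)).congr_deriv ?_
      ring)
  have split : squareInt L (fun x y => P.op x y * ((a + b * x) * P.p x y))
      = squareInt L (fun x y => ((a + b * x) * P.p x y * (P.px x y + P.pxxx x y)
        + b / 2 * P.p x y ^ 2 - 3 / 2 * b * P.px x y ^ 2 - b / 2 * P.z x y ^ 2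
        - (a + b * x) * P.z x y * P.py x y)
        + (a + b * x) * (P.py x y * P.z x y + P.p x y * P.zy x y))
        + (-(b / 2) * P.mass + 3 / 2 * b * P.massX + b / 2 * P.massZ) := by
    unfold mass massX massZ
    rw [← squareInt_const_mul, ← squareInt_const_mul, ← squareInt_const_mul,
      ← squareInt_add (by fun_prop) (by fun_prop), ← squareInt_add (by fun_prop) (by fun_prop),
      ← squareInt_add (by fun_prop) (by fun_prop)]
    congr 1; ext x y
    unfold op
    ring
  have bx : (∫ y in (0:ℝ)..L, (((a + b * L) * P.p L y ^ 2 / 2 + (a + b * L) * P.p L y * P.pxx L y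
      - (a + b * L) * P.px L y ^ 2 / 2 - b * P.p L y * P.px L y - (a + b * L) * P.z L y ^ 2 / 2)
      - ((a + b * 0) * P.p 0 y ^ 2 / 2 + (a + b * 0) * P.p 0 y * P.pxx 0 y
      - (a + b * 0) * P.px 0 y ^ 2 / 2 - b * P.p 0 y * P.px 0 y - (a + b * 0) * P.z 0 y ^ 2 / 2)))
      = (a - (a + b * L) * α ^ 2) / 2 * P.slopeTrace + a / 2 * P.fluxTrace := by
    unfold slopeTrace fluxTrace
    rw [← intervalIntegral.integral_const_mul, ← intervalIntegral.integral_const_mul,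
      ← intervalIntegral.integral_add (Continuous.intervalIntegrable (by fun_prop) _ _)
        (Continuous.intervalIntegrable (by fun_prop) _ _)]
    refine intervalIntegral.integral_congr fun y hy => ?_
    rw [Set.uIcc_of_le hL] at hy
    simp only [P.left y hy, P.right y hy, P.slope y hy, P.z_right]
    ring
  have byy : (∫ x in (0:ℝ)..L, ((a + b * x) * P.p x L * P.z x L - (a + b * x) * P.p x 0 * P.z x 0))
      = β * ∫ x in (0:ℝ)..L, (a + b * x) * P.p x L ^ 2 := by
    rw [← intervalIntegral.integral_const_mul]
    refine intervalIntegral.integral_congr fun x hx => ?_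
    rw [Set.uIcc_of_le hL] at hx
    simp only [P.z_top hx, P.z_bottom hx]
    ring
  rw [split, div, bx, byy]
  ring

theorem energy_identity (hL : 0 ≤ L) :
    squareInt L (fun x y => P.op x y * P.p x y)
      = (1 - α ^ 2) / 2 * P.slopeTrace + 1 / 2 * P.fluxTrace + β * P.topTrace := by
  have h := P.weighted_energy_identity hL 1 0
  simp only [zero_mul, add_zero, one_mul] at h
  rw [h]
  unfold topTrace
  ring

theorem moment_inequality (hL : 0 ≤ L) (hβ : 0 ≤ β) :
    3 / 2 * P.massX + 1 / 2 * P.massZ ≤ squareInt L (fun x y => P.op x y * (x * P.p x y))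
      + 1 / 2 * P.mass + L * α ^ 2 / 2 * P.slopeTrace := by
  have h := P.weighted_energy_identity hL 0 1
  simp only [zero_add, one_mul, zero_div, zero_mul] at h
  have : 0 ≤ ∫ x in (0:ℝ)..L, x * P.p x L ^ 2 :=
    intervalIntegral.integral_nonneg hL fun x hx => mul_nonneg hx.1 (sq_nonneg _)
  nlinarith [mul_nonneg hβ this]

theorem mass_nonneg (hL : 0 ≤ L) : 0 ≤ P.mass := squareInt_nonneg hL fun _ _ => sq_nonneg _

theorem massX_nonneg (hL : 0 ≤ L) : 0 ≤ P.massX := squareInt_nonneg hL fun _ _ => sq_nonneg _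

theorem massZ_nonneg (hL : 0 ≤ L) : 0 ≤ P.massZ := squareInt_nonneg hL fun _ _ => sq_nonneg _

theorem slopeTrace_nonneg (hL : 0 ≤ L) : 0 ≤ P.slopeTrace :=
  intervalIntegral.integral_nonneg hL fun _ _ => sq_nonneg _

theorem topTrace_nonneg (hL : 0 ≤ L) : 0 ≤ P.topTrace :=
  intervalIntegral.integral_nonneg hL fun _ _ => sq_nonneg _

theorem fluxTrace_nonneg (hL : 0 ≤ L) : 0 ≤ P.fluxTrace :=
  intervalIntegral.integral_nonneg hL fun _ _ => sq_nonneg _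

end KPProfile

section Plate

open Function

variable {f f' : ℝ → ℝ → ℝ} {L : ℝ}

/-- Constant term of the affine correction making `plateShape` clamped at both ends. -/
def plateOffset (L : ℝ) (f : ℝ → ℝ → ℝ) (y : ℝ) : ℝ :=
  -6 * primX (primX (primX f)) L y / L ^ 2 + 2 * primX (primX f) L y / L

/-- Linear term of the affine correction making `plateShape` clamped at both ends. -/
def plateTilt (L : ℝ) (f : ℝ → ℝ → ℝ) (y : ℝ) : ℝ :=
  -6 * primX (primX f) L y / L ^ 2 + 12 * primX (primX (primX f)) L y / L ^ 3

/-- The second derivative of the clamped potential. -/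
def plateMoment (L : ℝ) (f : ℝ → ℝ → ℝ) (x y : ℝ) : ℝ :=
  primX f x y + plateOffset L f y + plateTilt L f y * x

/-- The first derivative of the clamped potential. -/
def plateSlope (L : ℝ) (f : ℝ → ℝ → ℝ) (x y : ℝ) : ℝ :=
  primX (primX f) x y + plateOffset L f y * x + plateTilt L f y * x ^ 2 / 2

/-- The potential whose third derivative in `x` is `f` up to a function of `y`, and which vanishes
to first order at `x = 0` and `x = L`. -/
def plateShape (L : ℝ) (f : ℝ → ℝ → ℝ) (x y : ℝ) : ℝ :=
  primX (primX (primX f)) x y + plateOffset L f y * x ^ 2 / 2 + plateTilt L f y * x ^ 3 / 6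

section Continuity

variable {X : Type*} [TopologicalSpace X] {a b : X → ℝ}

@[fun_prop]
theorem Continuous.plateOffset (hf : Continuous (uncurry f)) (hb : Continuous b) :
    Continuous fun q => plateOffset L f (b q) := by
  unfold _root_.plateOffset
  fun_prop

@[fun_prop]
theorem Continuous.plateTilt (hf : Continuous (uncurry f)) (hb : Continuous b) :
    Continuous fun q => plateTilt L f (b q) := by
  unfold _root_.plateTilt
  fun_prop

@[fun_prop]
theorem Continuous.plateMoment (hf : Continuous (uncurry f)) (ha : Continuous a)
    (hb : Continuous b) : Continuous fun q => plateMoment L f (a q) (b q) := by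
  unfold _root_.plateMoment
  fun_prop

@[fun_prop]
theorem Continuous.plateSlope (hf : Continuous (uncurry f)) (ha : Continuous a)
    (hb : Continuous b) : Continuous fun q => plateSlope L f (a q) (b q) := by
  unfold _root_.plateSlope
  fun_prop

end Continuity

theorem hasDerivAt_plateMoment (hf : Continuous (uncurry f)) (x y : ℝ) :
    HasDerivAt (fun x => plateMoment L f x y) (f x y + plateTilt L f y) x := by
  refine (((hasDerivAt_primX hf x y).add_const _).add
    ((hasDerivAt_id x).const_mul (plateTilt L f y))).congr_deriv ?_
  simp

theorem hasDerivAt_plateSlope (hf : Continuous (uncurry f)) (x y : ℝ) :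
    HasDerivAt (fun x => plateSlope L f x y) (plateMoment L f x y) x := by
  refine (((hasDerivAt_primX (f := primX f) (by fun_prop) x y).add
    ((hasDerivAt_id x).const_mul (plateOffset L f y))).add
    (((hasDerivAt_pow 2 x).const_mul (plateTilt L f y)).div_const 2)).congr_deriv ?_
  simp [plateMoment]
  ring

theorem hasDerivAt_plateShape (hf : Continuous (uncurry f)) (x y : ℝ) :
    HasDerivAt (fun x => plateShape L f x y) (plateSlope L f x y) x := by
  refine (((hasDerivAt_primX (f := primX (primX f)) (by fun_prop) x y).add
    (((hasDerivAt_pow 2 x).const_mul (plateOffset L f y)).div_const 2)).add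
    (((hasDerivAt_pow 3 x).const_mul (plateTilt L f y)).div_const 6)).congr_deriv ?_
  simp [plateSlope]
  ring

theorem hasDerivAt_plateMoment_param (hf : Continuous (uncurry f)) (hf' : Continuous (uncurry f'))
    (h : ∀ x y, HasDerivAt (fun y => f x y) (f' x y) y) (x y : ℝ) :
    HasDerivAt (fun y => plateMoment L f x y) (plateMoment L f' x y) y := by
  have h1 := hasDerivAt_primX_param hf hf' h
  have h2 := hasDerivAt_primX_param (f := primX f) (f' := primX f') (by fun_prop) (by fun_prop) h1
  have h3 := hasDerivAt_primX_param (f := primX (primX f)) (f' := primX (primX f'))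
    (by fun_prop) (by fun_prop) h2
  exact ((h1 x y).add ((((h3 L y).const_mul (-6)).div_const _).add
    (((h2 L y).const_mul 2).div_const _))).add (((((h2 L y).const_mul (-6)).div_const _).add
    (((h3 L y).const_mul 12).div_const _)).mul_const x)

theorem plateSlope_left (y : ℝ) : plateSlope L f 0 y = 0 := by simp [plateSlope, primX_zero]

theorem plateSlope_right (hL : L ≠ 0) (y : ℝ) : plateSlope L f L y = 0 := by
  unfold plateSlope plateOffset plateTilt
  field_simp
  ring

theorem plateShape_left (y : ℝ) : plateShape L f 0 y = 0 := by simp [plateShape, primX_zero]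

theorem plateShape_right (hL : L ≠ 0) (y : ℝ) : plateShape L f L y = 0 := by
  unfold plateShape plateOffset plateTilt
  field_simp
  ring

theorem plateSlope_eq_primX (hf : Continuous (uncurry f)) (x y : ℝ) :
    plateSlope L f x y = primX (plateMoment L f) x y := by
  have := intervalIntegral.integral_eq_sub_of_hasDerivAt
    (fun s (_ : s ∈ Set.uIcc 0 x) => hasDerivAt_plateSlope (L := L) hf s y)
    (Continuous.intervalIntegrable (by fun_prop) _ _)
  rw [primX, this, plateSlope_left, sub_zero]

theorem sq_plateMoment_le (hf : Continuous (uncurry f)) (hL : 0 < L) (y : ℝ) {x : ℝ}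
    (hx : x ∈ Set.Icc 0 L) :
    plateMoment L f x y ^ 2 ≤ 729 * L * ∫ s in (0:ℝ)..L, f s y ^ 2 := by
  set N := L * ∫ s in (0:ℝ)..L, f s y ^ 2 with hN
  have hN0 : 0 ≤ N := (sq_nonneg _).trans (sq_primX_le hf y hx)
  have h1 : ∀ s ∈ Set.Icc 0 L, |primX f s y| ≤ √N := fun s hs =>
    Real.abs_le_sqrt (sq_primX_le hf y hs)
  have h2 : ∀ s ∈ Set.Icc 0 L, |primX (primX f) s y| ≤ L * √N := fun s hs => abs_primX_le h1 hs
  have h3 := abs_primX_le h2 (x := L) ⟨hL.le, le_rfl⟩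
  have h2L := h2 L ⟨hL.le, le_rfl⟩
  have k2 : |primX (primX f) L y / L| ≤ √N := by
    rw [abs_div, abs_of_pos hL, div_le_iff₀ hL]
    linarith
  have k3 : |primX (primX (primX f)) L y / L ^ 2| ≤ √N := by
    rw [abs_div, abs_of_pos (by positivity : 0 < L ^ 2), div_le_iff₀ (by positivity)]
    linarith
  have hr : |x / L| ≤ 1 := by
    rw [abs_div, abs_of_pos hL, abs_of_nonneg hx.1, div_le_one hL]
    exact hx.2
  have e : plateMoment L f x y = primX f x y + (-6 * (primX (primX (primX f)) L y / L ^ 2)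
      + 2 * (primX (primX f) L y / L)) + (-6 * (primX (primX f) L y / L)
      + 12 * (primX (primX (primX f)) L y / L ^ 2)) * (x / L) := by
    unfold plateMoment plateOffset plateTilt
    field_simp
  have hs := Real.sqrt_nonneg N
  have hb : |plateMoment L f x y| ≤ 27 * √N := by
    rw [e]
    have hq : |(-6 * (primX (primX f) L y / L)
        + 12 * (primX (primX (primX f)) L y / L ^ 2)) * (x / L)| ≤ 18 * √N := by
      rw [abs_mul]
      have : |-6 * (primX (primX f) L y / L)
        + 12 * (primX (primX (primX f)) L y / L ^ 2)| ≤ 18 * √N := by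
        rw [abs_le] at *
        constructor <;> linarith [k2.1, k2.2, k3.1, k3.2]
      calc _ ≤ 18 * √N * 1 := mul_le_mul this hr (abs_nonneg _) (by positivity)
        _ = _ := mul_one _
    have h1x := h1 x hx
    rw [abs_le] at *
    constructor <;> linarith [k2.1, k2.2, k3.1, k3.2, hq.1, hq.2, h1x.1, h1x.2]
  calc plateMoment L f x y ^ 2 = |plateMoment L f x y| ^ 2 := (sq_abs _).symm
    _ ≤ (27 * √N) ^ 2 := by gcongr
    _ = 729 * L * ∫ s in (0:ℝ)..L, f s y ^ 2 := by
      rw [mul_pow, Real.sq_sqrt hN0, hN]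
      ring

theorem squareInt_weight_plateSlope_le (hL : 0 ≤ L) (hf : Continuous (uncurry f)) {w : ℝ → ℝ}
    (hw : Continuous w) (hw0 : ∀ y, 0 ≤ w y) :
    squareInt L (fun x y => w y * plateSlope L f x y ^ 2)
      ≤ L ^ 2 * squareInt L (fun x y => w y * plateMoment L f x y ^ 2) := by
  rw [squareInt_swap (f := fun x y => w y * plateMoment L f x y ^ 2) (by fun_prop), sq L, mul_assoc,
    ← intervalIntegral.integral_const_mul]
  refine squareInt_le_of_le_integral hL (by fun_prop) (by fun_prop) fun x hx y _ => ?_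
  rw [plateSlope_eq_primX hf, intervalIntegral.integral_const_mul, mul_left_comm]
  exact mul_le_mul_of_nonneg_left (sq_primX_le (by fun_prop) y hx) (hw0 y)

end Plate

namespace KPProfile

open Function

variable {L α β : ℝ} (P Q : KPProfile L α β)

theorem plate_identity (hL : 0 < L) (μ : ℝ) :
    μ / 2 * squareInt L (fun x y => exp (μ * y) * (P.p x y ^ 2 + plateMoment L P.z x y ^ 2))
      = squareInt L (fun x y => exp (μ * y) *
          (P.op x y * plateSlope L P.z x y + P.p x y * plateMoment L P.z x y))
        + (∫ y in (0:ℝ)..L, exp (μ * y) *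
            (P.px L y * plateMoment L P.z L y - P.px 0 y * plateMoment L P.z 0 y))
        + 1 / 2 * ∫ x in (0:ℝ)..L,
            (exp (μ * L) * (P.p x L ^ 2 + plateMoment L P.z x L ^ 2)
              - (P.p x 0 ^ 2 + plateMoment L P.z x 0 ^ 2)) := by
  have hz : Continuous (uncurry P.z) := by fun_prop
  have hzy : Continuous (uncurry P.zy) := by fun_prop
  have div := squareInt_divergence (L := L)
    (G₁ := fun x y => -exp (μ * y) * (P.p x y * plateSlope L P.z x y
      + P.pxx x y * plateSlope L P.z x y - P.px x y * plateMoment L P.z x y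
      + P.p x y * (P.z x y + plateTilt L P.z y) - plateTilt L P.zy y * plateShape L P.z x y
      + plateMoment L P.zy x y * plateSlope L P.z x y))
    (g₁ := fun x y => -exp (μ * y) * (P.op x y * plateSlope L P.z x y
      + P.p x y * plateMoment L P.z x y + P.p x y * P.py x y
      + plateMoment L P.z x y * plateMoment L P.zy x y))
    (G₂ := fun x y => exp (μ * y) * (P.p x y ^ 2 + plateMoment L P.z x y ^ 2) / 2)
    (g₂ := fun x y => exp (μ * y) * (μ / 2 * (P.p x y ^ 2 + plateMoment L P.z x y ^ 2)
      + P.p x y * P.py x y + plateMoment L P.z x y * plateMoment L P.zy x y))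
    (by fun_prop) (by fun_prop)
    (fun x y => by
      have hB := hasDerivAt_plateMoment (L := L) hz x y
      have hBy := hasDerivAt_plateMoment (L := L) hzy x y
      have hS := hasDerivAt_plateSlope (L := L) hz x y
      refine (((((((P.deriv_p x y).mul hS).add ((P.deriv_pxx x y).mul hS)).sub
        ((P.deriv_px x y).mul hB)).add ((P.deriv_p x y).mul ((P.deriv_z x y).add_const _))).sub
        ((hasDerivAt_plateShape (L := L) hz x y).const_mul (plateTilt L P.zy y))).add
        (hBy.mul hS)).const_mul (-exp (μ * y)) |>.congr_deriv ?_
      simp [op]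
      ring)
    (fun x y => by
      have he : HasDerivAt (fun y : ℝ => exp (μ * y)) (exp (μ * y) * μ) y := by
        simpa using ((hasDerivAt_id y).const_mul μ).exp
      refine ((he.mul (((P.deriv_p_y x y).pow 2).add
        ((hasDerivAt_plateMoment_param (L := L) hz hzy P.deriv_z_y x y).pow 2))).div_const
          2).congr_deriv ?_
      simp
      ring)
  have split : μ / 2 * squareInt L
      (fun x y => exp (μ * y) * (P.p x y ^ 2 + plateMoment L P.z x y ^ 2))
      = squareInt L (fun x y => exp (μ * y) *
          (P.op x y * plateSlope L P.z x y + P.p x y * plateMoment L P.z x y))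
        + squareInt L (fun x y => -exp (μ * y) * (P.op x y * plateSlope L P.z x y
      + P.p x y * plateMoment L P.z x y + P.p x y * P.py x y
      + plateMoment L P.z x y * plateMoment L P.zy x y)
      + exp (μ * y) * (μ / 2 * (P.p x y ^ 2 + plateMoment L P.z x y ^ 2)
      + P.p x y * P.py x y + plateMoment L P.z x y * plateMoment L P.zy x y)) := by
    rw [← squareInt_const_mul, ← squareInt_add (by fun_prop) (by fun_prop)]
    congr 1; ext x y
    ring
  rw [split, div, ← intervalIntegral.integral_const_mul, add_assoc]
  congr 2
  · refine intervalIntegral.integral_congr fun y hy => ?_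
    rw [Set.uIcc_of_le hL.le] at hy
    simp only [P.left y hy, P.right y hy, plateSlope_left, plateSlope_right hL.ne',
      plateShape_left, plateShape_right hL.ne']
    ring
  · congr 1; ext x
    simp
    ring

theorem plate_estimate (hL : 0 < L) (hα : |α| < 1) {μ K : ℝ} (hμ : 0 ≤ μ) (hK : 0 < K) :
    μ / 2 * squareInt L (fun x y => exp (μ * y) * (P.p x y ^ 2 + plateMoment L P.z x y ^ 2))
      ≤ squareInt L (fun x y => exp (μ * y) *
          (P.op x y * plateSlope L P.z x y + P.p x y * plateMoment L P.z x y))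
        + exp (μ * L) * (K * P.slopeTrace + 729 * L / K * P.massZ
          + (1 + 729 * L ^ 2 * β ^ 2) / 2 * P.topTrace) := by
  have hz : Continuous (uncurry P.z) := by fun_prop
  have side : (∫ y in (0:ℝ)..L, exp (μ * y) *
      (P.px L y * plateMoment L P.z L y - P.px 0 y * plateMoment L P.z 0 y))
      ≤ exp (μ * L) * (K * P.slopeTrace + 729 * L / K * P.massZ) := by
    have hm : P.massZ = ∫ y in (0:ℝ)..L, ∫ s in (0:ℝ)..L, P.z s y ^ 2 :=
      squareInt_swap (by fun_prop)
    rw [hm, slopeTrace, ← intervalIntegral.integral_const_mul,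
      ← intervalIntegral.integral_const_mul,
      ← intervalIntegral.integral_add (Continuous.intervalIntegrable (by fun_prop) _ _)
        (Continuous.intervalIntegrable (by fun_prop) _ _), ← intervalIntegral.integral_const_mul]
    refine intervalIntegral.integral_mono_on hL.le (Continuous.intervalIntegrable (by fun_prop) _ _)
      (Continuous.intervalIntegrable (by fun_prop) _ _) fun y hy => ?_
    have b0 := sq_plateMoment_le hz hL y (x := 0) ⟨le_rfl, hL.le⟩
    have bL := sq_plateMoment_le hz hL y (x := L) ⟨hL.le, le_rfl⟩
    have hI : 0 ≤ ∫ s in (0:ℝ)..L, P.z s y ^ 2 :=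
      intervalIntegral.integral_nonneg hL.le fun _ _ => sq_nonneg _
    set I := ∫ s in (0:ℝ)..L, P.z s y ^ 2
    set a := P.px 0 y
    set m := plateMoment L P.z L y
    set n := plateMoment L P.z 0 y
    have hα2 : α ^ 2 ≤ 1 := (sq_le_one_iff_abs_le_one α).2 hα.le
    have key : α * a * m - a * n ≤ K * a ^ 2 + 729 * L / K * I := by
      have h1 : α * a * m ≤ K / 2 * a ^ 2 + 729 * L / (2 * K) * I := by
        have : 0 ≤ (K * (α * a) - m) ^ 2 := sq_nonneg _
        have h2 : K * (α * a * m) ≤ K ^ 2 / 2 * a ^ 2 + 729 * L / 2 * I := by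
          nlinarith [mul_nonneg (sub_nonneg.2 hα2) (sq_nonneg (K * a))]
        have : α * a * m ≤ (K ^ 2 / 2 * a ^ 2 + 729 * L / 2 * I) / K := by
          rw [le_div_iff₀ hK]; linarith
        refine this.trans_eq ?_
        field_simp
      have h1' : -(a * n) ≤ K / 2 * a ^ 2 + 729 * L / (2 * K) * I := by
        have h2 : K * (-(a * n)) ≤ K ^ 2 / 2 * a ^ 2 + 729 * L / 2 * I := by
          nlinarith [sq_nonneg (K * a + n)]
        have : -(a * n) ≤ (K ^ 2 / 2 * a ^ 2 + 729 * L / 2 * I) / K := by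
          rw [le_div_iff₀ hK]; linarith
        refine this.trans_eq ?_
        field_simp
      have e : 729 * L / K * I = 729 * L / (2 * K) * I + 729 * L / (2 * K) * I := by
        field_simp
        ring
      linarith
    rw [P.slope y hy]
    calc exp (μ * y) * (α * a * m - a * n) ≤ exp (μ * y) * (K * a ^ 2 + 729 * L / K * I) := by
          gcongr
      _ ≤ exp (μ * L) * (K * a ^ 2 + 729 * L / K * I) := by
          gcongr
          exact hy.2
  have top : (∫ x in (0:ℝ)..L, (exp (μ * L) * (P.p x L ^ 2 + plateMoment L P.z x L ^ 2)
      - (P.p x 0 ^ 2 + plateMoment L P.z x 0 ^ 2)))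
      ≤ exp (μ * L) * ((1 + 729 * L ^ 2 * β ^ 2) * P.topTrace) := by
    have hzL : ∫ s in (0:ℝ)..L, P.z s L ^ 2 = β ^ 2 * P.topTrace := by
      rw [topTrace, ← intervalIntegral.integral_const_mul]
      refine intervalIntegral.integral_congr fun s hs => ?_
      rw [Set.uIcc_of_le hL.le] at hs
      simp only [P.z_top hs]
      ring
    have : ∀ x ∈ Set.Icc 0 L, exp (μ * L) * (P.p x L ^ 2 + plateMoment L P.z x L ^ 2)
      - (P.p x 0 ^ 2 + plateMoment L P.z x 0 ^ 2)
      ≤ exp (μ * L) * P.p x L ^ 2 + exp (μ * L) * (729 * L * β ^ 2 * P.topTrace) := by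
      intro x hx
      have h1 := sq_plateMoment_le hz hL L hx
      rw [hzL] at h1
      have h2 := mul_le_mul_of_nonneg_left h1 (exp_nonneg (μ * L))
      nlinarith [sq_nonneg (P.p x 0), sq_nonneg (plateMoment L P.z x 0)]
    refine (intervalIntegral.integral_mono_on hL.le
      (Continuous.intervalIntegrable (by fun_prop) _ _)
      (Continuous.intervalIntegrable (by fun_prop) _ _) this).trans_eq ?_
    rw [intervalIntegral.integral_add (Continuous.intervalIntegrable (by fun_prop) _ _)
      (Continuous.intervalIntegrable (by fun_prop) _ _), intervalIntegral.integral_const_mul,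
      intervalIntegral.integral_const, smul_eq_mul, ← topTrace]
    ring
  rw [P.plate_identity hL μ]
  linarith
/-- The real form `op P = F - ω S`, `op S = G + ω P` of the resolvent equation at frequency `ω`,
imposed on the closed square. -/
structure ResolventPair (ω : ℝ) (P S : KPProfile L α β) (F G : ℝ → ℝ → ℝ) : Prop where
  cont_F : Continuous (uncurry F)
  cont_G : Continuous (uncurry G)
  eq_left : ∀ x ∈ Set.Icc 0 L, ∀ y ∈ Set.Icc 0 L, P.op x y = F x y - ω * S.p x y
  eq_right : ∀ x ∈ Set.Icc 0 L, ∀ y ∈ Set.Icc 0 L, S.op x y = G x y + ω * P.p x y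

namespace ResolventPair

variable {P Q} {S : KPProfile L α β} {ω : ℝ} {F G : ℝ → ℝ → ℝ}

theorem energy_le (R : ResolventPair ω P S F G) (hL : 0 ≤ L) {ε : ℝ} (hε : 0 < ε) :
    (1 - α ^ 2) / 2 * (P.slopeTrace + S.slopeTrace) + β * (P.topTrace + S.topTrace)
      ≤ ε * (P.mass + S.mass) + 1 / (4 * ε) * squareInt L (fun x y => F x y ^ 2 + G x y ^ 2) := by
  have hF := R.cont_F
  have hG := R.cont_G
  have h : squareInt L (fun x y => P.op x y * P.p x y + S.op x y * S.p x y)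
      ≤ squareInt L (fun x y => ε * (P.p x y ^ 2 + S.p x y ^ 2)
        + 1 / (4 * ε) * (F x y ^ 2 + G x y ^ 2)) := by
    refine squareInt_mono hL (by fun_prop) (by fun_prop) fun x hx y hy => ?_
    rw [R.eq_left x hx y hy, R.eq_right x hx y hy]
    have e : ε * (P.p x y ^ 2 + S.p x y ^ 2) + 1 / (4 * ε) * (F x y ^ 2 + G x y ^ 2)
        - (F x y * P.p x y + G x y * S.p x y)
        = 1 / (4 * ε) * ((2 * ε * P.p x y - F x y) ^ 2 + (2 * ε * S.p x y - G x y) ^ 2) := by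
      field_simp
      ring
    have : 0 ≤ 1 / (4 * ε) * ((2 * ε * P.p x y - F x y) ^ 2 + (2 * ε * S.p x y - G x y) ^ 2) := by
      positivity
    linarith
  rw [squareInt_add (by fun_prop) (by fun_prop), squareInt_add (by fun_prop) (by fun_prop),
    squareInt_const_mul, squareInt_const_mul, squareInt_add (f := fun x y => P.p x y ^ 2)
    (by fun_prop) (by fun_prop), P.energy_identity hL, S.energy_identity hL, ← mass, ← mass] at h
  linarith [P.fluxTrace_nonneg hL, S.fluxTrace_nonneg hL]

theorem moment_le (R : ResolventPair ω P S F G) (hL : 0 ≤ L) (hβ : 0 ≤ β) :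
    3 / 2 * (P.massX + S.massX) + 1 / 2 * (P.massZ + S.massZ)
      ≤ (P.mass + S.mass) + L ^ 2 / 2 * squareInt L (fun x y => F x y ^ 2 + G x y ^ 2)
        + L * α ^ 2 / 2 * (P.slopeTrace + S.slopeTrace) := by
  have hF := R.cont_F
  have hG := R.cont_G
  have h : squareInt L (fun x y => P.op x y * (x * P.p x y) + S.op x y * (x * S.p x y))
      ≤ squareInt L (fun x y => 1 / 2 * (P.p x y ^ 2 + S.p x y ^ 2)
        + L ^ 2 / 2 * (F x y ^ 2 + G x y ^ 2)) := by
    refine squareInt_mono hL (by fun_prop) (by fun_prop) fun x hx y hy => ?_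
    rw [R.eq_left x hx y hy, R.eq_right x hx y hy]
    have hx2 : x ^ 2 ≤ L ^ 2 := pow_le_pow_left₀ hx.1 hx.2 2
    nlinarith [sq_nonneg (x * F x y - P.p x y), sq_nonneg (x * G x y - S.p x y),
      mul_nonneg (sub_nonneg.2 hx2) (sq_nonneg (F x y)),
      mul_nonneg (sub_nonneg.2 hx2) (sq_nonneg (G x y))]
  rw [squareInt_add (by fun_prop) (by fun_prop), squareInt_add (by fun_prop) (by fun_prop),
    squareInt_const_mul, squareInt_const_mul, squareInt_add (f := fun x y => P.p x y ^ 2)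
    (by fun_prop) (by fun_prop), ← mass, ← mass] at h
  linarith [P.moment_inequality hL hβ, S.moment_inequality hL hβ]

/-- All traces and first-order norms are controlled by the masses and the data. -/
theorem exists_bounds (hL : 0 < L) (hα : |α| < 1) (hβ : 0 < β) :
    ∃ C ≥ (1:ℝ), ∀ (ω : ℝ) (P S : KPProfile L α β) (F G : ℝ → ℝ → ℝ), ResolventPair ω P S F G →
      P.massX + S.massX ≤ C * (P.mass + S.mass + squareInt L (fun x y => F x y ^ 2 + G x y ^ 2)) ∧
      P.massZ + S.massZ ≤ C * (P.mass + S.mass + squareInt L (fun x y => F x y ^ 2 + G x y ^ 2)) ∧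
      P.slopeTrace + S.slopeTrace
        ≤ C * (P.mass + S.mass + squareInt L (fun x y => F x y ^ 2 + G x y ^ 2)) ∧
      P.topTrace + S.topTrace
        ≤ C * (P.mass + S.mass + squareInt L (fun x y => F x y ^ 2 + G x y ^ 2)) := by
  have hα2 : α ^ 2 < 1 := (sq_lt_one_iff_abs_lt_one α).2 hα
  set c := (1 - α ^ 2) / 2 with hc
  have hc0 : 0 < c := by rw [hc]; linarith
  refine ⟨2 + L ^ 2 + L / c + 1 / c + 1 / β, ?_, fun ω P S F G R => ?_⟩
  · have : 0 ≤ L ^ 2 + L / c + 1 / c + 1 / β := by positivity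
    linarith
  have en := R.energy_le hL.le one_pos
  have mo := R.moment_le hL.le hβ.le
  have hA : 0 ≤ P.mass + S.mass := add_nonneg (P.mass_nonneg hL.le) (S.mass_nonneg hL.le)
  have hX := add_nonneg (P.massX_nonneg hL.le) (S.massX_nonneg hL.le)
  have hZ := add_nonneg (P.massZ_nonneg hL.le) (S.massZ_nonneg hL.le)
  have hb := add_nonneg (P.slopeTrace_nonneg hL.le) (S.slopeTrace_nonneg hL.le)
  have ht := add_nonneg (P.topTrace_nonneg hL.le) (S.topTrace_nonneg hL.le)
  have hf : 0 ≤ squareInt L (fun x y => F x y ^ 2 + G x y ^ 2) :=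
    squareInt_nonneg hL.le fun _ _ => by positivity
  rw [← hc] at en
  set A := P.mass + S.mass
  set X := P.massX + S.massX
  set Z := P.massZ + S.massZ
  set b := P.slopeTrace + S.slopeTrace
  set t := P.topTrace + S.topTrace
  set f := squareInt L (fun x y => F x y ^ 2 + G x y ^ 2)
  have b1 : b ≤ 1 / c * (A + f) := by
    rw [one_div, inv_mul_eq_div, le_div_iff₀ hc0]
    nlinarith [mul_nonneg hβ.le ht]
  have t1 : t ≤ 1 / β * (A + f) := by
    rw [one_div, inv_mul_eq_div, le_div_iff₀ hβ]
    nlinarith [mul_nonneg hc0.le hb]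
  have m1 : 3 / 2 * X + 1 / 2 * Z ≤ (1 + L ^ 2 / 2 + L / c / 2) * (A + f) := by
    have h1 : L * α ^ 2 / 2 * b ≤ L / 2 * (1 / c * (A + f)) := by
      have : L * α ^ 2 / 2 ≤ L / 2 := by nlinarith
      exact mul_le_mul this b1 hb (by positivity)
    have h2 : L / 2 * (1 / c * (A + f)) = L / c / 2 * (A + f) := by ring
    nlinarith [mul_nonneg (sq_nonneg L) hA]
  have hN : 0 ≤ A + f := add_nonneg hA hf
  have hL2 : 0 ≤ L ^ 2 * (A + f) := by positivity
  have hLc : 0 ≤ L / c * (A + f) := by positivity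
  have h1c : 0 ≤ 1 / c * (A + f) := by positivity
  have h1b : 0 ≤ 1 / β * (A + f) := by positivity
  refine ⟨?_, ?_, ?_, ?_⟩ <;> linarith

theorem weighted_pairing_le (R : ResolventPair ω P S F G) (hL : 0 < L) {Ω : ℝ} (hω : |ω| ≤ Ω)
    {μ : ℝ} (hμ0 : 0 ≤ μ) :
    squareInt L (fun x y => exp (μ * y) *
          (P.op x y * plateSlope L P.z x y + P.p x y * plateMoment L P.z x y))
      + squareInt L (fun x y => exp (μ * y) *
          (S.op x y * plateSlope L S.z x y + S.p x y * plateMoment L S.z x y))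
      ≤ exp (μ * L) / 2 * squareInt L (fun x y => F x y ^ 2 + G x y ^ 2)
        + (Ω + 1) / 2 * (squareInt L (fun x y => exp (μ * y) * P.p x y ^ 2)
          + squareInt L (fun x y => exp (μ * y) * S.p x y ^ 2)
          + squareInt L (fun x y => exp (μ * y) * plateSlope L P.z x y ^ 2)
          + squareInt L (fun x y => exp (μ * y) * plateSlope L S.z x y ^ 2))
        + 1 / 2 * (squareInt L (fun x y => exp (μ * y) * plateMoment L P.z x y ^ 2)
          + squareInt L (fun x y => exp (μ * y) * plateMoment L S.z x y ^ 2)) := by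
  have hF := R.cont_F
  have hG := R.cont_G
  have hzP : Continuous (uncurry P.z) := by fun_prop
  have hzS : Continuous (uncurry S.z) := by fun_prop
  rw [← squareInt_add (by fun_prop) (by fun_prop),
    ← squareInt_add (by fun_prop) (by fun_prop),
    ← squareInt_add (by fun_prop) (by fun_prop),
    ← squareInt_add (by fun_prop) (by fun_prop),
    ← squareInt_add (by fun_prop) (by fun_prop),
    ← squareInt_const_mul, ← squareInt_const_mul, ← squareInt_const_mul,
    ← squareInt_add (by fun_prop) (by fun_prop),
    ← squareInt_add (by fun_prop) (by fun_prop)]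
  refine squareInt_mono hL.le (by fun_prop) (by fun_prop) fun x hx y hy => ?_
  rw [R.eq_left x hx y hy, R.eq_right x hx y hy]
  have he : exp (μ * y) ≤ exp (μ * L) := by
    gcongr
    exact hy.2
  have he0 := exp_nonneg (μ * y)
  have hFG : exp (μ * y) * (F x y ^ 2 + G x y ^ 2) ≤ exp (μ * L) * (F x y ^ 2 + G x y ^ 2) := by
    gcongr
  set a := plateSlope L P.z x y
  set b := plateSlope L S.z x y
  set m := plateMoment L P.z x y
  set n := plateMoment L S.z x y
  have hw1 : -(ω * S.p x y * a) ≤ Ω / 2 * (S.p x y ^ 2 + a ^ 2) := by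
    rw [abs_le] at hω
    nlinarith [mul_nonneg (sub_nonneg.2 hω.2) (sq_nonneg (S.p x y + a)),
      mul_nonneg (by linarith [hω.1] : 0 ≤ Ω + ω) (sq_nonneg (S.p x y - a))]
  have hw2 : ω * P.p x y * b ≤ Ω / 2 * (P.p x y ^ 2 + b ^ 2) := by
    rw [abs_le] at hω
    nlinarith [mul_nonneg (sub_nonneg.2 hω.2) (sq_nonneg (P.p x y - b)),
      mul_nonneg (by linarith [hω.1] : 0 ≤ Ω + ω) (sq_nonneg (P.p x y + b))]
  have hpt : (F x y - ω * S.p x y) * a + P.p x y * m + ((G x y + ω * P.p x y) * b + S.p x y * n)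
      ≤ 1 / 2 * (F x y ^ 2 + G x y ^ 2)
        + (Ω + 1) / 2 * (P.p x y ^ 2 + S.p x y ^ 2 + a ^ 2 + b ^ 2) + 1 / 2 * (m ^ 2 + n ^ 2) := by
    nlinarith [sq_nonneg (F x y - a), sq_nonneg (G x y - b), sq_nonneg (P.p x y - m),
      sq_nonneg (S.p x y - n)]
  have := mul_le_mul_of_nonneg_left hpt he0
  linarith

theorem plate_le (R : ResolventPair ω P S F G) (hL : 0 < L) (hα : |α| < 1) {Ω : ℝ} (hω : |ω| ≤ Ω)
    {K : ℝ} (hK : 0 < K) :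
    P.mass + S.mass ≤ exp ((2 + (Ω + 1) * (1 + L ^ 2)) * L) *
      (squareInt L (fun x y => F x y ^ 2 + G x y ^ 2)
        + 2 * K * (P.slopeTrace + S.slopeTrace) + 1458 * L / K * (P.massZ + S.massZ)
        + (1 + 729 * L ^ 2 * β ^ 2) * (P.topTrace + S.topTrace)) := by
  have hF := R.cont_F
  have hG := R.cont_G
  have hΩ : 0 ≤ Ω := (abs_nonneg ω).trans hω
  set μ := 2 + (Ω + 1) * (1 + L ^ 2) with hμ
  have hμ0 : 0 ≤ μ := by positivity
  have hzP : Continuous (uncurry P.z) := by fun_prop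
  have hzS : Continuous (uncurry S.z) := by fun_prop
  have eP := P.plate_estimate hL hα hμ0 hK
  have eS := S.plate_estimate hL hα hμ0 hK
  have sP := squareInt_weight_plateSlope_le hL.le hzP (w := fun y => exp (μ * y)) (by fun_prop)
    fun y => exp_nonneg _
  have sS := squareInt_weight_plateSlope_le hL.le hzS (w := fun y => exp (μ * y)) (by fun_prop)
    fun y => exp_nonneg _
  have hsum := R.weighted_pairing_le hL hω hμ0
  have splitP : squareInt L (fun x y => exp (μ * y) * (P.p x y ^ 2 + plateMoment L P.z x y ^ 2))
      = squareInt L (fun x y => exp (μ * y) * P.p x y ^ 2)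
        + squareInt L (fun x y => exp (μ * y) * plateMoment L P.z x y ^ 2) := by
    rw [← squareInt_add (by fun_prop) (by fun_prop)]
    simp only [mul_add]
  have splitS : squareInt L (fun x y => exp (μ * y) * (S.p x y ^ 2 + plateMoment L S.z x y ^ 2))
      = squareInt L (fun x y => exp (μ * y) * S.p x y ^ 2)
        + squareInt L (fun x y => exp (μ * y) * plateMoment L S.z x y ^ 2) := by
    rw [← squareInt_add (by fun_prop) (by fun_prop)]
    simp only [mul_add]
  have lower : ∀ q : KPProfile L α β, q.mass ≤ squareInt L (fun x y => exp (μ * y) * q.p x y ^ 2) :=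
    fun q => squareInt_mono hL.le (by fun_prop) (by fun_prop) fun x hx y hy => by
      have : 1 ≤ exp (μ * y) := one_le_exp (mul_nonneg hμ0 hy.1)
      nlinarith [sq_nonneg (q.p x y)]
  have mP0 : 0 ≤ squareInt L (fun x y => exp (μ * y) * plateMoment L P.z x y ^ 2) :=
    squareInt_nonneg hL.le fun _ _ => by positivity
  have mS0 : 0 ≤ squareInt L (fun x y => exp (μ * y) * plateMoment L S.z x y ^ 2) :=
    squareInt_nonneg hL.le fun _ _ => by positivity
  have lP := lower P
  have lS := lower S
  rw [splitP] at eP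
  rw [splitS] at eS
  have pP0 := (P.mass_nonneg hL.le).trans lP
  have pS0 := (S.mass_nonneg hL.le).trans lS
  set a := squareInt L (fun x y => exp (μ * y) * P.p x y ^ 2)
  set b := squareInt L (fun x y => exp (μ * y) * S.p x y ^ 2)
  set m := squareInt L (fun x y => exp (μ * y) * plateMoment L P.z x y ^ 2)
  set n := squareInt L (fun x y => exp (μ * y) * plateMoment L S.z x y ^ 2)
  have hsP := mul_le_mul_of_nonneg_left sP (by positivity : 0 ≤ (Ω + 1) / 2)
  have hsS := mul_le_mul_of_nonneg_left sS (by positivity : 0 ≤ (Ω + 1) / 2)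
  have hmn : 0 ≤ (Ω + 1) * (m + n) := by positivity
  have hab : 0 ≤ (Ω + 1) * L ^ 2 * (a + b) := by positivity
  have hKe : (1458 : ℝ) * L / K = 2 * (729 * L / K) := by ring
  have total : 1 / 2 * (a + b + m + n) ≤ exp (μ * L) / 2 *
      squareInt L (fun x y => F x y ^ 2 + G x y ^ 2)
      + exp (μ * L) * (K * P.slopeTrace + 729 * L / K * P.massZ
          + (1 + 729 * L ^ 2 * β ^ 2) / 2 * P.topTrace)
      + exp (μ * L) * (K * S.slopeTrace + 729 * L / K * S.massZ
          + (1 + 729 * L ^ 2 * β ^ 2) / 2 * S.topTrace) := by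
    have : μ / 2 * (a + m) + μ / 2 * (b + n)
        = (a + b + m + n) + (Ω + 1) / 2 * (a + b) + (Ω + 1) / 2 * (m + n)
          + (Ω + 1) / 2 * L ^ 2 * (a + b) + (Ω + 1) / 2 * L ^ 2 * (m + n) := by
      rw [hμ]; ring
    linarith
  rw [hKe]
  linarith

/-- Uniform resolvent bound on bounded frequency ranges. -/
theorem exists_low_frequency_bound (hL : 0 < L) (hα : |α| < 1) (hβ : 0 < β) (Ω : ℝ) :
    ∃ C > (0:ℝ), ∀ (ω : ℝ) (P S : KPProfile L α β) (F G : ℝ → ℝ → ℝ), ResolventPair ω P S F G →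
      |ω| ≤ Ω → P.mass + S.mass ≤ C * squareInt L (fun x y => F x y ^ 2 + G x y ^ 2) := by
  obtain ⟨C₂, hC₂, bounds⟩ := exists_bounds hL hα hβ
  have hα2 : α ^ 2 < 1 := (sq_lt_one_iff_abs_lt_one α).2 hα
  set c := (1 - α ^ 2) / 2 with hc
  have hc0 : 0 < c := by rw [hc]; linarith
  set E := exp ((2 + (Ω + 1) * (1 + L ^ 2)) * L) with hE
  have hE0 : 0 < E := exp_pos _
  set M := E * (1 + 729 * L ^ 2 * β ^ 2) with hM
  have hM0 : 0 < M := by positivity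
  set K := 4 * (1458 * L * E * C₂) with hK
  have hK0 : 0 < K := by positivity
  set D := 2 * E * K / c + M / β with hD
  have hD0 : 0 < D := by positivity
  refine ⟨2 * (E + 1 / 4 + D ^ 2), by positivity, fun ω P S F G R hω => ?_⟩
  obtain ⟨-, bZ, -, -⟩ := bounds ω P S F G R
  have pl := R.plate_le hL hα hω hK0
  have en := R.energy_le hL.le (ε := 1 / (4 * D)) (by positivity)
  rw [← hE] at pl
  have hb := add_nonneg (P.slopeTrace_nonneg hL.le) (S.slopeTrace_nonneg hL.le)
  have ht := add_nonneg (P.topTrace_nonneg hL.le) (S.topTrace_nonneg hL.le)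
  rw [← hc] at en
  set A := P.mass + S.mass
  set Z := P.massZ + S.massZ
  set b := P.slopeTrace + S.slopeTrace
  set t := P.topTrace + S.topTrace
  set f := squareInt L (fun x y => F x y ^ 2 + G x y ^ 2)
  set N := 1 / (4 * D) * A + 1 / (4 * (1 / (4 * D))) * f with hN
  have b1 : 2 * E * K * b ≤ 2 * E * K / c * N := by
    have : b ≤ N / c := by
      rw [le_div_iff₀ hc0]
      nlinarith [mul_nonneg hβ.le ht]
    calc _ ≤ 2 * E * K * (N / c) := by gcongr
      _ = _ := by ring
  have t1 : M * t ≤ M / β * N := by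
    have : t ≤ N / β := by
      rw [le_div_iff₀ hβ]
      nlinarith [mul_nonneg hc0.le hb]
    calc _ ≤ M * (N / β) := by gcongr
      _ = _ := by ring
  have z1 : E * (1458 * L / K * Z) ≤ 1 / 4 * (A + f) := by
    calc _ ≤ E * (1458 * L / K * (C₂ * (A + f))) := by gcongr
      _ = 1 / 4 * (A + f) := by
        rw [hK]
        field_simp
  have hDN : D * N = 1 / 4 * A + D ^ 2 * f := by
    rw [hN]
    field_simp
  have hsplit : D * N = 2 * E * K / c * N + M / β * N := by rw [hD]; ring
  have hMt : E * ((1 + 729 * L ^ 2 * β ^ 2) * t) = M * t := by rw [hM]; ring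
  linarith

end ResolventPair
end KPProfile

section Dirichlet

open Function

variable {f f' g : ℝ → ℝ → ℝ} {L : ℝ}

/-- The primitive of `-f` corrected by a linear function so as to vanish at `x = 0` and `x = L`. -/
def dirichletPot (L : ℝ) (f : ℝ → ℝ → ℝ) (x y : ℝ) : ℝ :=
  -primX f x y + x / L * primX f L y

/-- The derivative of `dirichletPot` in `x`. -/
def dirichletSlope (L : ℝ) (f : ℝ → ℝ → ℝ) (x y : ℝ) : ℝ :=
  -f x y + primX f L y / L

section Continuity

variable {X : Type*} [TopologicalSpace X] {a b : X → ℝ}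

@[fun_prop]
theorem Continuous.dirichletPot (hf : Continuous (uncurry f)) (ha : Continuous a)
    (hb : Continuous b) : Continuous fun q => dirichletPot L f (a q) (b q) := by
  unfold _root_.dirichletPot
  fun_prop

@[fun_prop]
theorem Continuous.dirichletSlope (hf : Continuous (uncurry f)) (ha : Continuous a)
    (hb : Continuous b) : Continuous fun q => dirichletSlope L f (a q) (b q) := by
  unfold _root_.dirichletSlope
  fun_prop

end Continuity

theorem hasDerivAt_dirichletPot (hf : Continuous (uncurry f)) (x y : ℝ) :
    HasDerivAt (fun x => dirichletPot L f x y) (dirichletSlope L f x y) x := by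
  refine ((hasDerivAt_primX hf x y).neg.add
    (((hasDerivAt_id x).div_const L).mul_const (primX f L y))).congr_deriv ?_
  simp [dirichletSlope]
  ring

theorem hasDerivAt_dirichletPot_param (hf : Continuous (uncurry f)) (hf' : Continuous (uncurry f'))
    (h : ∀ x y, HasDerivAt (fun y => f x y) (f' x y) y) (x y : ℝ) :
    HasDerivAt (fun y => dirichletPot L f x y) (dirichletPot L f' x y) y :=
  (hasDerivAt_primX_param hf hf' h x y).neg.add
    ((hasDerivAt_primX_param hf hf' h L y).const_mul (x / L))

theorem dirichletPot_left (y : ℝ) : dirichletPot L f 0 y = 0 := by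
  simp [dirichletPot, primX_zero]

theorem dirichletPot_right (hL : L ≠ 0) (y : ℝ) : dirichletPot L f L y = 0 := by
  simp [dirichletPot, hL]

theorem dirichletPot_eq_primX (hf : Continuous (uncurry f)) (x y : ℝ) :
    dirichletPot L f x y = primX (dirichletSlope L f) x y := by
  have := intervalIntegral.integral_eq_sub_of_hasDerivAt
    (fun s (_ : s ∈ Set.uIcc 0 x) => hasDerivAt_dirichletPot (L := L) hf s y)
    (Continuous.intervalIntegrable (by fun_prop) _ _)
  rw [primX, this, dirichletPot_left, sub_zero]

theorem sq_dirichletPot_le (hf : Continuous (uncurry f)) (hL : 0 < L) (y : ℝ) {x : ℝ}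
    (hx : x ∈ Set.Icc 0 L) :
    dirichletPot L f x y ^ 2 ≤ 4 * L * ∫ s in (0:ℝ)..L, f s y ^ 2 := by
  have h1 := sq_primX_le hf y hx
  have h2 := sq_primX_le hf y (x := L) ⟨hL.le, le_rfl⟩
  have hr0 : 0 ≤ x / L := div_nonneg hx.1 hL.le
  have hr1 : x / L ≤ 1 := (div_le_one hL).2 hx.2
  have h3 : (x / L * primX f L y) ^ 2 ≤ primX f L y ^ 2 := by
    rw [mul_pow]
    exact mul_le_of_le_one_left (sq_nonneg _) (pow_le_one₀ hr0 hr1)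
  unfold dirichletPot
  nlinarith [sq_nonneg (primX f x y + x / L * primX f L y)]

theorem sq_tailX_le (hf : Continuous (uncurry f)) (y : ℝ) {x : ℝ} (hx : x ∈ Set.Icc 0 L) :
    tailX L f x y ^ 2 ≤ 4 * L * ∫ s in (0:ℝ)..L, f s y ^ 2 := by
  have h1 := sq_primX_le hf y hx
  have h2 := sq_primX_le hf y (x := L) ⟨hx.1.trans hx.2, le_rfl⟩
  unfold tailX
  nlinarith [sq_nonneg (primX f x y + primX f L y)]

theorem sq_dirichletSlope_tailX_le (hf : Continuous (uncurry f)) (hL : 0 < L) (y : ℝ) {x : ℝ}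
    (hx : x ∈ Set.Icc 0 L) :
    dirichletSlope L (tailX L f) x y ^ 2 ≤ 16 * L * ∫ s in (0:ℝ)..L, f s y ^ 2 := by
  have h1 := sq_tailX_le hf y hx
  have h2 : (primX (tailX L f) L y / L) ^ 2 ≤ 4 * L * ∫ s in (0:ℝ)..L, f s y ^ 2 := by
    have h3 := sq_primX_le (f := tailX L f) (by fun_prop) y (x := L) ⟨hL.le, le_rfl⟩
    have h4 : ∫ s in (0:ℝ)..L, tailX L f s y ^ 2
        ≤ ∫ _s in (0:ℝ)..L, 4 * L * ∫ s in (0:ℝ)..L, f s y ^ 2 :=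
      intervalIntegral.integral_mono_on hL.le (Continuous.intervalIntegrable (by fun_prop) _ _)
        (Continuous.intervalIntegrable (by fun_prop) _ _) fun s hs => sq_tailX_le hf y hs
    rw [intervalIntegral.integral_const, smul_eq_mul, sub_zero] at h4
    rw [div_pow, div_le_iff₀ (by positivity)]
    nlinarith
  unfold dirichletSlope
  nlinarith [sq_nonneg (tailX L f x y + primX (tailX L f) L y / L)]

theorem sq_dirichletPot_tailX_le (hf : Continuous (uncurry f)) (hL : 0 < L) (y : ℝ) {x : ℝ}
    (hx : x ∈ Set.Icc 0 L) :
    dirichletPot L (tailX L f) x y ^ 2 ≤ 16 * L ^ 3 * ∫ s in (0:ℝ)..L, f s y ^ 2 := by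
  have h3 := sq_primX_le (f := dirichletSlope L (tailX L f)) (by fun_prop) y hx
  have h4 : ∫ s in (0:ℝ)..L, dirichletSlope L (tailX L f) s y ^ 2
      ≤ ∫ _s in (0:ℝ)..L, 16 * L * ∫ s in (0:ℝ)..L, f s y ^ 2 :=
    intervalIntegral.integral_mono_on hL.le (Continuous.intervalIntegrable (by fun_prop) _ _)
      (Continuous.intervalIntegrable (by fun_prop) _ _)
      fun s hs => sq_dirichletSlope_tailX_le hf hL y hs
  rw [intervalIntegral.integral_const, smul_eq_mul, sub_zero] at h4
  rw [dirichletPot_eq_primX (by fun_prop)]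
  nlinarith

theorem abs_squareInt_le (hL : 0 ≤ L) (hf : Continuous (uncurry f)) (hg : Continuous (uncurry g))
    (h : ∀ x ∈ Set.Icc 0 L, ∀ y ∈ Set.Icc 0 L, |f x y| ≤ g x y) :
    |squareInt L f| ≤ squareInt L g := by
  rw [abs_le, neg_eq_neg_one_mul, ← squareInt_const_mul]
  refine ⟨squareInt_mono hL (by fun_prop) hf fun x hx y hy => ?_,
    squareInt_mono hL hf hg fun x hx y hy => (abs_le.1 (h x hx y hy)).2⟩
  linarith [(abs_le.1 (h x hx y hy)).1]

/-- Integrals over the square inherit pointwise bounds by the squared norms of slices. -/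
theorem squareInt_sq_le_of_slice (hL : 0 ≤ L) (hf : Continuous (uncurry f))
    (hg : Continuous (uncurry g)) {C : ℝ}
    (h : ∀ x ∈ Set.Icc 0 L, ∀ y ∈ Set.Icc 0 L, f x y ^ 2 ≤ C * ∫ s in (0:ℝ)..L, g s y ^ 2) :
    squareInt L (fun x y => f x y ^ 2) ≤ L * C * squareInt L (fun x y => g x y ^ 2) := by
  rw [squareInt_swap (f := fun x y => g x y ^ 2) (by fun_prop), mul_assoc,
    ← intervalIntegral.integral_const_mul]
  exact squareInt_le_of_le_integral hL (by fun_prop) (by fun_prop) h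

end Dirichlet

namespace KPProfile

open Function

variable {L α β : ℝ} (P Q : KPProfile L α β)

/-- The solution of `-h_xx = p` with Dirichlet conditions at `x = 0` and `x = L`. -/
def pot : ℝ → ℝ → ℝ := dirichletPot L (tailX L P.p)

/-- The derivative of `pot` in `x`. -/
def potX : ℝ → ℝ → ℝ := dirichletSlope L (tailX L P.p)

/-- The derivative of `pot` in `y`. -/
def potY : ℝ → ℝ → ℝ := dirichletPot L P.z

section Continuity

variable {X : Type*} [TopologicalSpace X] {a b : X → ℝ}

@[fun_prop]
theorem continuous_pot (ha : Continuous a) (hb : Continuous b) :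
    Continuous fun q => P.pot (a q) (b q) := by
  unfold pot
  fun_prop

@[fun_prop]
theorem continuous_potX (ha : Continuous a) (hb : Continuous b) :
    Continuous fun q => P.potX (a q) (b q) := by
  unfold potX
  fun_prop

@[fun_prop]
theorem continuous_potY (ha : Continuous a) (hb : Continuous b) :
    Continuous fun q => P.potY (a q) (b q) := by
  unfold potY
  fun_prop

end Continuity

theorem deriv_pot (x y : ℝ) : HasDerivAt (fun x => P.pot x y) (P.potX x y) x :=
  hasDerivAt_dirichletPot (by fun_prop) x y

theorem deriv_potX (x y : ℝ) : HasDerivAt (fun x => P.potX x y) (-P.p x y) x :=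
  (hasDerivAt_tailX P.cont_p x y).neg.add_const _

theorem deriv_pot_y (x y : ℝ) : HasDerivAt (fun y => P.pot x y) (P.potY x y) y :=
  hasDerivAt_dirichletPot_param (by fun_prop) (by fun_prop)
    (hasDerivAt_tailX_param P.cont_p P.cont_py P.deriv_p_y) x y

theorem pot_left (y : ℝ) : P.pot 0 y = 0 := dirichletPot_left y

theorem pot_right (hL : L ≠ 0) (y : ℝ) : P.pot L y = 0 := dirichletPot_right hL y

theorem squareInt_mul_pot (hL : 0 < L) :
    squareInt L (fun x y => P.p x y * P.pot x y) = squareInt L (fun x y => P.potX x y ^ 2) := by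
  have div := squareInt_divergence (L := L)
    (G₁ := fun x y => P.potX x y * P.pot x y)
    (g₁ := fun x y => P.potX x y ^ 2 - P.p x y * P.pot x y)
    (G₂ := fun _ _ => 0) (g₂ := fun _ _ => 0) (by fun_prop) (by fun_prop)
    (fun x y => ((P.deriv_potX x y).mul (P.deriv_pot x y)).congr_deriv (by ring))
    (fun x y => hasDerivAt_const _ _)
  simp only [add_zero, P.pot_left, P.pot_right hL.ne', mul_zero, sub_zero,
    intervalIntegral.integral_zero] at div
  rw [squareInt_sub (by fun_prop) (by fun_prop)] at div
  linarith

theorem mass_eq_squareInt_potX_mul (hL : 0 < L) :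
    P.mass = squareInt L (fun x y => P.potX x y * P.px x y) := by
  have div := squareInt_divergence (L := L)
    (G₁ := fun x y => P.potX x y * P.p x y)
    (g₁ := fun x y => P.potX x y * P.px x y - P.p x y ^ 2)
    (G₂ := fun _ _ => 0) (g₂ := fun _ _ => 0) (by fun_prop) (by fun_prop)
    (fun x y => ((P.deriv_potX x y).mul (P.deriv_p x y)).congr_deriv (by ring))
    (fun x y => hasDerivAt_const _ _)
  have h0 : (∫ y in (0:ℝ)..L, (P.potX L y * P.p L y - P.potX 0 y * P.p 0 y))
      = ∫ _y in (0:ℝ)..L, (0:ℝ) := by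
    refine intervalIntegral.integral_congr fun y hy => ?_
    rw [Set.uIcc_of_le hL.le] at hy
    simp [P.left y hy, P.right y hy]
  simp only [add_zero, sub_zero, intervalIntegral.integral_zero] at div h0
  rw [squareInt_sub (by fun_prop) (by fun_prop), h0, ← mass] at div
  linarith

theorem op_pot_identity (hL : 0 < L) :
    squareInt L (fun x y => P.op x y * Q.pot x y)
      = squareInt L (fun x y => -(P.p x y * Q.potX x y) - P.px x y * Q.p x y
          - P.z x y * Q.potY x y)
        + (∫ y in (0:ℝ)..L, (P.px 0 y * Q.potX 0 y - α * P.px 0 y * Q.potX L y))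
        + ∫ x in (0:ℝ)..L, β * P.p x L * Q.pot x L := by
  have div := squareInt_divergence (L := L)
    (G₁ := fun x y => P.p x y * Q.pot x y + P.pxx x y * Q.pot x y - P.px x y * Q.potX x y)
    (g₁ := fun x y => (P.px x y + P.pxxx x y) * Q.pot x y + P.p x y * Q.potX x y
      + P.px x y * Q.p x y)
    (G₂ := fun x y => P.z x y * Q.pot x y)
    (g₂ := fun x y => P.zy x y * Q.pot x y + P.z x y * Q.potY x y)
    (by fun_prop) (by fun_prop)
    (fun x y => by
      refine ((((P.deriv_p x y).mul (Q.deriv_pot x y)).add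
        ((P.deriv_pxx x y).mul (Q.deriv_pot x y))).sub
        ((P.deriv_px x y).mul (Q.deriv_potX x y))).congr_deriv ?_
      ring)
    (fun x y => (P.deriv_z_y x y).mul (Q.deriv_pot_y x y))
  have split : squareInt L (fun x y => P.op x y * Q.pot x y)
      = squareInt L (fun x y => -(P.p x y * Q.potX x y) - P.px x y * Q.p x y
          - P.z x y * Q.potY x y)
        + squareInt L (fun x y => ((P.px x y + P.pxxx x y) * Q.pot x y + P.p x y * Q.potX x y
          + P.px x y * Q.p x y) + (P.zy x y * Q.pot x y + P.z x y * Q.potY x y)) := by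
    rw [← squareInt_add (by fun_prop) (by fun_prop)]
    congr 1; ext x y
    unfold op
    ring
  rw [split, div, add_assoc]
  congr 2
  · refine intervalIntegral.integral_congr fun y hy => ?_
    rw [Set.uIcc_of_le hL.le] at hy
    simp only [P.slope y hy, Q.pot_left, Q.pot_right hL.ne']
    ring
  · refine intervalIntegral.integral_congr fun x hx => ?_
    rw [Set.uIcc_of_le hL.le] at hx
    simp only [P.z_top hx, P.z_bottom hx]
    ring

theorem squareInt_sq_pot_le (hL : 0 < L) :
    squareInt L (fun x y => P.pot x y ^ 2) ≤ 16 * L ^ 4 * P.mass := by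
  refine (squareInt_sq_le_of_slice hL.le (f := P.pot) (g := P.p) (by fun_prop) (by fun_prop)
    fun x hx y _ => sq_dirichletPot_tailX_le P.cont_p hL y hx).trans_eq ?_
  rw [← mass]
  ring

theorem abs_op_pot_le (hL : 0 < L) (hα : |α| < 1) (hβ : 0 < β) :
    |squareInt L (fun x y => P.op x y * Q.pot x y)|
      ≤ (1 + 16 * L + 10 * L ^ 2 + β * (1 + 8 * L ^ 4)) *
        (P.mass + Q.mass + P.massX + (P.massZ + Q.massZ) + P.slopeTrace
          + (P.topTrace + Q.topTrace)) := by
  have hα2 : α ^ 2 ≤ 1 := (sq_le_one_iff_abs_le_one α).2 hα.le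
  have interior : |squareInt L (fun x y => -(P.p x y * Q.potX x y) - P.px x y * Q.p x y
      - P.z x y * Q.potY x y)|
      ≤ 1 / 2 * (P.mass + 16 * L ^ 2 * Q.mass + P.massX + Q.mass + P.massZ
        + 4 * L ^ 2 * Q.massZ) := by
    have h1 : squareInt L (fun x y => Q.potX x y ^ 2) ≤ 16 * L ^ 2 * Q.mass := by
      refine (squareInt_sq_le_of_slice hL.le (f := Q.potX) (g := Q.p) (by fun_prop) (by fun_prop)
        fun x hx y _ => sq_dirichletSlope_tailX_le Q.cont_p hL y hx).trans_eq ?_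
      rw [← mass]
      ring
    have h2 : squareInt L (fun x y => Q.potY x y ^ 2) ≤ 4 * L ^ 2 * Q.massZ := by
      refine (squareInt_sq_le_of_slice hL.le (f := Q.potY) (g := Q.z) (by fun_prop) (by fun_prop)
        fun x hx y _ => sq_dirichletPot_le (by fun_prop) hL y hx).trans_eq ?_
      rw [← massZ]
      ring
    have h3 : |squareInt L (fun x y => -(P.p x y * Q.potX x y) - P.px x y * Q.p x y
        - P.z x y * Q.potY x y)| ≤ 1 / 2 * (P.mass + squareInt L (fun x y => Q.potX x y ^ 2)
          + P.massX + Q.mass + P.massZ + squareInt L (fun x y => Q.potY x y ^ 2)) := by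
      unfold mass massX massZ
      rw [← squareInt_add (by fun_prop) (by fun_prop), ← squareInt_add (by fun_prop) (by fun_prop),
        ← squareInt_add (by fun_prop) (by fun_prop), ← squareInt_add (by fun_prop) (by fun_prop),
        ← squareInt_add (by fun_prop) (by fun_prop), ← squareInt_const_mul]
      refine abs_squareInt_le hL.le (by fun_prop) (by fun_prop) fun x _ y _ => ?_
      rw [abs_le]
      constructor <;>
        nlinarith [sq_nonneg (P.p x y - Q.potX x y), sq_nonneg (P.p x y + Q.potX x y),
          sq_nonneg (P.px x y - Q.p x y), sq_nonneg (P.px x y + Q.p x y),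
          sq_nonneg (P.z x y - Q.potY x y), sq_nonneg (P.z x y + Q.potY x y)]
    linarith
  have side : |∫ y in (0:ℝ)..L, (P.px 0 y * Q.potX 0 y - α * P.px 0 y * Q.potX L y)|
      ≤ P.slopeTrace + 16 * L * Q.mass := by
    have hm : Q.mass = ∫ y in (0:ℝ)..L, ∫ s in (0:ℝ)..L, Q.p s y ^ 2 :=
      squareInt_swap (by fun_prop)
    rw [hm, slopeTrace, ← intervalIntegral.integral_const_mul,
      ← intervalIntegral.integral_add (Continuous.intervalIntegrable (by fun_prop) _ _)
        (Continuous.intervalIntegrable (by fun_prop) _ _)]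
    refine (intervalIntegral.abs_integral_le_integral_abs hL.le).trans
      (intervalIntegral.integral_mono_on hL.le (Continuous.intervalIntegrable (by fun_prop) _ _)
        (Continuous.intervalIntegrable (by fun_prop) _ _) fun y hy => ?_)
    have b0 : Q.potX 0 y ^ 2 ≤ _ :=
      sq_dirichletSlope_tailX_le Q.cont_p hL y (x := 0) ⟨le_rfl, hL.le⟩
    have bL : Q.potX L y ^ 2 ≤ _ :=
      sq_dirichletSlope_tailX_le Q.cont_p hL y (x := L) ⟨hL.le, le_rfl⟩
    have ha : (α * P.px 0 y) ^ 2 ≤ P.px 0 y ^ 2 := by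
      rw [mul_pow]
      exact mul_le_of_le_one_left (sq_nonneg _) hα2
    rw [abs_le]
    constructor <;>
      nlinarith [sq_nonneg (P.px 0 y - Q.potX 0 y), sq_nonneg (P.px 0 y + Q.potX 0 y),
        sq_nonneg (α * P.px 0 y - Q.potX L y), sq_nonneg (α * P.px 0 y + Q.potX L y)]
  have top : |∫ x in (0:ℝ)..L, β * P.p x L * Q.pot x L|
      ≤ β / 2 * (P.topTrace + 16 * L ^ 4 * Q.topTrace) := by
    have e : β / 2 * (P.topTrace + 16 * L ^ 4 * Q.topTrace)
        = ∫ x in (0:ℝ)..L, (β / 2 * P.p x L ^ 2 + β / 2 * (16 * L ^ 3 * Q.topTrace)) := by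
      rw [intervalIntegral.integral_add (Continuous.intervalIntegrable (by fun_prop) _ _)
        (Continuous.intervalIntegrable (by fun_prop) _ _), intervalIntegral.integral_const_mul,
        intervalIntegral.integral_const, smul_eq_mul, ← topTrace]
      ring
    rw [e]
    refine (intervalIntegral.abs_integral_le_integral_abs hL.le).trans
      (intervalIntegral.integral_mono_on hL.le (Continuous.intervalIntegrable (by fun_prop) _ _)
        (Continuous.intervalIntegrable (by fun_prop) _ _) fun x hx => ?_)
    have hb : Q.pot x L ^ 2 ≤ 16 * L ^ 3 * Q.topTrace := sq_dirichletPot_tailX_le Q.cont_p hL L hx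
    rw [mul_assoc, abs_mul, abs_of_pos hβ]
    have : |P.p x L * Q.pot x L| ≤ 1 / 2 * (P.p x L ^ 2 + 16 * L ^ 3 * Q.topTrace) := by
      rw [abs_le]
      constructor <;>
        nlinarith [sq_nonneg (P.p x L - Q.pot x L), sq_nonneg (P.p x L + Q.pot x L)]
    linarith [mul_le_mul_of_nonneg_left this hβ.le]
  rw [P.op_pot_identity Q hL]
  refine (abs_add_three _ _ _).trans ?_
  have m1 := P.mass_nonneg hL.le
  have m2 := Q.mass_nonneg hL.le
  have m3 := P.massX_nonneg hL.le
  have m4 := P.massZ_nonneg hL.le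
  have m5 := Q.massZ_nonneg hL.le
  have m6 := P.slopeTrace_nonneg hL.le
  have m7 := P.topTrace_nonneg hL.le
  have m8 := Q.topTrace_nonneg hL.le
  generalize P.mass = a1 at *
  generalize Q.mass = a2 at *
  generalize P.massX = a3 at *
  generalize P.massZ = a4 at *
  generalize Q.massZ = a5 at *
  generalize P.slopeTrace = a6 at *
  generalize P.topTrace = a7 at *
  generalize Q.topTrace = a8 at *
  have r1 : 0 ≤ (16 * L + 10 * L ^ 2 + β * (1 + 8 * L ^ 4)) * (a1 + a3 + a4 + a6) := by positivity
  have r2 : 0 ≤ β * (1 + 8 * L ^ 4) * a2 := by positivity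
  have r3 : 0 ≤ (1 + 16 * L + β * (1 + 8 * L ^ 4)) * a5 := by positivity
  have r4 : 0 ≤ (1 + 16 * L + 10 * L ^ 2) * (a7 + a8) := by positivity
  have r5 : 0 ≤ β * (1 + 8 * L ^ 4) * a7 := by positivity
  have r6 : 0 ≤ β * a8 := by positivity
  have r7 : 0 ≤ β * L ^ 4 * a7 := by positivity
  have r8 : 0 ≤ L ^ 2 * a2 := by positivity
  have r9 : 0 ≤ L ^ 2 * a5 := by positivity
  linarith

namespace ResolventPair

variable {P Q} {S : KPProfile L α β} {ω : ℝ} {F G : ℝ → ℝ → ℝ}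

/-- Testing against the Dirichlet potentials gains one power of the frequency. -/
theorem exists_frequency_gain (hL : 0 < L) (hα : |α| < 1) (hβ : 0 < β) :
    ∃ C > (0:ℝ), ∀ (ω : ℝ) (P S : KPProfile L α β) (F G : ℝ → ℝ → ℝ), ResolventPair ω P S F G →
      |ω| * (squareInt L (fun x y => P.potX x y ^ 2) + squareInt L (fun x y => S.potX x y ^ 2))
        ≤ C * (P.mass + S.mass + squareInt L (fun x y => F x y ^ 2 + G x y ^ 2)) := by
  obtain ⟨C₂, hC₂, bounds⟩ := exists_bounds hL hα hβ
  set D := 1 + 16 * L + 10 * L ^ 2 + β * (1 + 8 * L ^ 4) with hD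
  have hD0 : 0 < D := by positivity
  refine ⟨1 + 8 * L ^ 4 + 2 * D * (1 + 4 * C₂), by positivity, fun ω P S F G R => ?_⟩
  have hF := R.cont_F
  have hG := R.cont_G
  obtain ⟨bX, bZ, bs, bt⟩ := bounds ω P S F G R
  have tP := P.abs_op_pot_le S hL hα hβ
  have tS := S.abs_op_pot_le P hL hα hβ
  rw [← hD] at tP tS
  have gP0 : 0 ≤ squareInt L (fun x y => P.potX x y ^ 2) :=
    squareInt_nonneg hL.le fun _ _ => sq_nonneg _
  have gS0 : 0 ≤ squareInt L (fun x y => S.potX x y ^ 2) :=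
    squareInt_nonneg hL.le fun _ _ => sq_nonneg _
  have f0 : 0 ≤ squareInt L (fun x y => F x y ^ 2 + G x y ^ 2) :=
    squareInt_nonneg hL.le fun _ _ => by positivity
  have eP : squareInt L (fun x y => P.op x y * S.pot x y)
      = squareInt L (fun x y => F x y * S.pot x y)
        - ω * squareInt L (fun x y => S.potX x y ^ 2) := by
    rw [← S.squareInt_mul_pot hL, ← squareInt_const_mul, ← squareInt_sub (by fun_prop)
      (by fun_prop)]
    refine squareInt_congr hL.le fun x hx y hy => ?_
    rw [R.eq_left x hx y hy]
    ring
  have eS : squareInt L (fun x y => S.op x y * P.pot x y)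
      = squareInt L (fun x y => G x y * P.pot x y)
        + ω * squareInt L (fun x y => P.potX x y ^ 2) := by
    rw [← P.squareInt_mul_pot hL, ← squareInt_const_mul, ← squareInt_add (by fun_prop)
      (by fun_prop)]
    refine squareInt_congr hL.le fun x hx y hy => ?_
    rw [R.eq_right x hx y hy]
    ring
  have data : |squareInt L (fun x y => F x y * S.pot x y - G x y * P.pot x y)|
      ≤ 1 / 2 * (squareInt L (fun x y => F x y ^ 2 + G x y ^ 2)
        + squareInt L (fun x y => S.pot x y ^ 2) + squareInt L (fun x y => P.pot x y ^ 2)) := by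
    rw [← squareInt_add (by fun_prop) (by fun_prop), ← squareInt_add (by fun_prop) (by fun_prop),
      ← squareInt_const_mul]
    refine abs_squareInt_le hL.le (by fun_prop) (by fun_prop) fun x _ y _ => ?_
    rw [abs_le]
    constructor <;>
      nlinarith [sq_nonneg (F x y - S.pot x y), sq_nonneg (F x y + S.pot x y),
        sq_nonneg (G x y - P.pot x y), sq_nonneg (G x y + P.pot x y)]
  rw [squareInt_sub (by fun_prop) (by fun_prop)] at data
  have qP := P.squareInt_sq_pot_le hL
  have qS := S.squareInt_sq_pot_le hL
  have eω : |ω| * (squareInt L (fun x y => P.potX x y ^ 2)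
      + squareInt L (fun x y => S.potX x y ^ 2))
      ≤ |squareInt L (fun x y => F x y * S.pot x y) - squareInt L (fun x y => G x y * P.pot x y)|
        + |squareInt L (fun x y => P.op x y * S.pot x y)|
        + |squareInt L (fun x y => S.op x y * P.pot x y)| := by
    rw [← abs_of_nonneg (add_nonneg gP0 gS0), ← abs_mul]
    have : ω * (squareInt L (fun x y => P.potX x y ^ 2) + squareInt L (fun x y => S.potX x y ^ 2))
        = (squareInt L (fun x y => F x y * S.pot x y) - squareInt L (fun x y => G x y * P.pot x y))
          + (-squareInt L (fun x y => P.op x y * S.pot x y))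
          + squareInt L (fun x y => S.op x y * P.pot x y) := by
      rw [eP, eS]; ring
    rw [this]
    refine (abs_add_three _ _ _).trans_eq ?_
    rw [abs_neg]
  have m1 := P.mass_nonneg hL.le
  have m2 := S.mass_nonneg hL.le
  have ops : |squareInt L (fun x y => P.op x y * S.pot x y)|
        + |squareInt L (fun x y => S.op x y * P.pot x y)|
      ≤ 2 * D * (1 + 4 * C₂) *
        (P.mass + S.mass + squareInt L (fun x y => F x y ^ 2 + G x y ^ 2)) := by
    have k1 := P.massX_nonneg hL.le
    have k2 := S.massX_nonneg hL.le
    have k3 := P.massZ_nonneg hL.le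
    have k4 := S.massZ_nonneg hL.le
    have k5 := P.slopeTrace_nonneg hL.le
    have k6 := S.slopeTrace_nonneg hL.le
    calc _ ≤ D * (P.mass + S.mass + P.massX + (P.massZ + S.massZ) + P.slopeTrace
          + (P.topTrace + S.topTrace)) + D * (S.mass + P.mass + S.massX + (S.massZ + P.massZ)
          + S.slopeTrace + (S.topTrace + P.topTrace)) := add_le_add tP tS
      _ = D * (P.mass + S.mass + P.massX + (P.massZ + S.massZ) + P.slopeTrace
          + (P.topTrace + S.topTrace) + (S.mass + P.mass + S.massX + (S.massZ + P.massZ)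
          + S.slopeTrace + (S.topTrace + P.topTrace))) := by ring
      _ ≤ D * (2 * (1 + 4 * C₂) *
          (P.mass + S.mass + squareInt L (fun x y => F x y ^ 2 + G x y ^ 2))) :=
        mul_le_mul_of_nonneg_left (by linarith) hD0.le
      _ = _ := by ring
  have l1 : 0 ≤ L ^ 4 * squareInt L (fun x y => F x y ^ 2 + G x y ^ 2) := by positivity
  linarith

/-- Uniform resolvent bound at all frequencies. -/
theorem exists_bound (hL : 0 < L) (hα : |α| < 1) (hβ : 0 < β) :
    ∃ C > (0:ℝ), ∀ (ω : ℝ) (P S : KPProfile L α β) (F G : ℝ → ℝ → ℝ), ResolventPair ω P S F G →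
      P.mass + S.mass ≤ C * squareInt L (fun x y => F x y ^ 2 + G x y ^ 2) := by
  obtain ⟨C₂, hC₂, bounds⟩ := exists_bounds hL hα hβ
  obtain ⟨C₄, hC₄, gain⟩ := exists_frequency_gain hL hα hβ
  obtain ⟨C, hC, low⟩ := exists_low_frequency_bound hL hα hβ (16 * C₂ * C₄)
  refine ⟨C + 1, by positivity, fun ω P S F G R => ?_⟩
  have f0 : 0 ≤ squareInt L (fun x y => F x y ^ 2 + G x y ^ 2) :=
    squareInt_nonneg hL.le fun _ _ => by positivity
  rcases le_total |ω| (16 * C₂ * C₄) with hω | hω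
  · linarith [low ω P S F G R hω]
  obtain ⟨bX, -, -, -⟩ := bounds ω P S F G R
  have g := gain ω P S F G R
  have hC₂0 : 0 < C₂ := by linarith
  have interp : ∀ q : KPProfile L α β, q.mass
      ≤ 4 * C₂ * squareInt L (fun x y => q.potX x y ^ 2) + 1 / (4 * C₂) * q.massX := by
    intro q
    rw [q.mass_eq_squareInt_potX_mul hL, massX, ← squareInt_const_mul, ← squareInt_const_mul,
      ← squareInt_add (by fun_prop) (by fun_prop)]
    refine squareInt_mono hL.le (by fun_prop) (by fun_prop) fun x _ y _ => ?_
    have e : 4 * C₂ * q.potX x y ^ 2 + 1 / (4 * C₂) * q.px x y ^ 2 - q.potX x y * q.px x y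
        = 1 / (4 * C₂) * ((4 * C₂ * q.potX x y - q.px x y / 2) ^ 2 + 3 / 4 * q.px x y ^ 2) := by
      field_simp
      ring
    have : 0 ≤ 1 / (4 * C₂) *
      ((4 * C₂ * q.potX x y - q.px x y / 2) ^ 2 + 3 / 4 * q.px x y ^ 2) := by positivity
    linarith
  have iP := interp P
  have iS := interp S
  have gP0 : 0 ≤ squareInt L (fun x y => P.potX x y ^ 2) :=
    squareInt_nonneg hL.le fun _ _ => sq_nonneg _
  have gS0 : 0 ≤ squareInt L (fun x y => S.potX x y ^ 2) :=
    squareInt_nonneg hL.le fun _ _ => sq_nonneg _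
  set gg := squareInt L (fun x y => P.potX x y ^ 2) + squareInt L (fun x y => S.potX x y ^ 2)
    with hgg
  set f := squareInt L (fun x y => F x y ^ 2 + G x y ^ 2)
  set A := P.mass + S.mass with hA
  have h1 : 4 * C₂ * gg ≤ 1 / 4 * (A + f) := by
    have : 16 * C₂ * C₄ * gg ≤ C₄ * (A + f) :=
      (mul_le_mul_of_nonneg_right hω (add_nonneg gP0 gS0)).trans g
    have h2 : C₄ * (16 * C₂ * gg) ≤ C₄ * (A + f) := by linarith
    linarith [le_of_mul_le_mul_left h2 hC₄]
  have h2 : 1 / (4 * C₂) * (P.massX + S.massX) ≤ 1 / 4 * (A + f) := by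
    calc _ ≤ 1 / (4 * C₂) * (C₂ * (A + f)) := by gcongr
      _ = _ := by field_simp
  have h3 : A ≤ 4 * C₂ * gg + 1 / (4 * C₂) * (P.massX + S.massX) := by
    rw [hA, hgg]
    linarith
  have : 0 ≤ C * f := by positivity
  linarith

end ResolventPair
end KPProfile

open Function in
theorem squareInt_intervalIntegral {L a b : ℝ} {f : ℝ → ℝ → ℝ → ℝ} (hf : Continuous ↿f) :
    squareInt L (fun x y => ∫ t in a..b, f x y t)
      = ∫ t in a..b, squareInt L (fun x y => f x y t) := by
  unfold squareInt
  rw [← intervalIntegral_swap_of_continuous (f := fun x t => ∫ y in (0:ℝ)..L, f x y t)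
    (by fun_prop)]
  congr 1; ext x
  exact intervalIntegral_swap_of_continuous (f := fun y t => f x y t) (by fun_prop) _ _ _ _

open Function Filter Topology in
/-- Term-by-term integration over the square of a nonnegative series with continuous sum. -/
theorem hasSum_squareInt {L : ℝ} (hL : 0 ≤ L) {ι : Type*} [Countable ι] {a : ι → ℝ → ℝ → ℝ}
    {H : ℝ → ℝ → ℝ} (ha : ∀ n, Continuous (uncurry (a n))) (hH : Continuous (uncurry H))
    (ha0 : ∀ n x y, 0 ≤ a n x y) (h : ∀ x y, HasSum (fun n => a n x y) (H x y)) :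
    HasSum (fun n => squareInt L (a n)) (squareInt L H) := by
  have hfin : ∀ s : Finset ι, Continuous (uncurry fun x y => ∑ n ∈ s, a n x y) := fun s => by
    have := ha
    fun_prop
  have hle : ∀ (s : Finset ι) x y, ∑ n ∈ s, a n x y ≤ H x y := fun s x y =>
    sum_le_hasSum s (fun n _ => ha0 n x y) (h x y)
  have h0 : ∀ (s : Finset ι) x y, 0 ≤ ∑ n ∈ s, a n x y := fun s x y =>
    Finset.sum_nonneg fun n _ => ha0 n x y
  have hsum : ∀ s : Finset ι, ∑ n ∈ s, squareInt L (a n)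
      = squareInt L fun x y => ∑ n ∈ s, a n x y := by
    classical
    intro s
    induction s using Finset.induction_on with
    | empty => simp [squareInt]
    | insert n s hn ih =>
      simp only [Finset.sum_insert hn, ih]
      rw [squareInt_add (ha n) (hfin s)]
  unfold HasSum
  simp only [hsum]
  refine intervalIntegral.tendsto_integral_filter_of_dominated_convergence
    (fun x => ∫ y in (0:ℝ)..L, H x y) (Eventually.of_forall fun s => ?_)
    (Eventually.of_forall fun s => Eventually.of_forall fun x _ => ?_)
    (Continuous.intervalIntegrable (by fun_prop) _ _) (Eventually.of_forall fun x _ => ?_)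
  · have := hfin s
    exact Continuous.aestronglyMeasurable (by fun_prop)
  · have := hfin s
    rw [Real.norm_of_nonneg (intervalIntegral.integral_nonneg hL fun y _ => h0 s x y)]
    exact intervalIntegral.integral_mono_on hL (Continuous.intervalIntegrable (by fun_prop) _ _)
      (Continuous.intervalIntegrable (by fun_prop) _ _) fun y _ => hle s x y
  · refine intervalIntegral.tendsto_integral_filter_of_dominated_convergence
      (fun y => H x y) (Eventually.of_forall fun s => ?_)
      (Eventually.of_forall fun s => Eventually.of_forall fun y _ => ?_)
      (Continuous.intervalIntegrable (by fun_prop) _ _)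
      (Eventually.of_forall fun y _ => h x y)
    · have := hfin s
      exact Continuous.aestronglyMeasurable (by fun_prop)
    · rw [Real.norm_of_nonneg (h0 s x y)]
      exact hle s x y

/-- A solution of the closed-loop system on the closed square for nonnegative times, together with
the partial derivatives entering the equation. -/
structure KPFlow (L α β : ℝ) where
  u : ℝ → ℝ → ℝ → ℝ
  ux : ℝ → ℝ → ℝ → ℝ
  uxx : ℝ → ℝ → ℝ → ℝ
  uxxx : ℝ → ℝ → ℝ → ℝ
  uy : ℝ → ℝ → ℝ → ℝ
  uyy : ℝ → ℝ → ℝ → ℝ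
  ut : ℝ → ℝ → ℝ → ℝ
  cont_u : Continuous ↿u
  cont_ux : Continuous ↿ux
  cont_uxx : Continuous ↿uxx
  cont_uxxx : Continuous ↿uxxx
  cont_uy : Continuous ↿uy
  cont_uyy : Continuous ↿uyy
  cont_ut : Continuous ↿ut
  deriv_u : ∀ x y t, HasDerivAt (fun x => u x y t) (ux x y t) x
  deriv_ux : ∀ x y t, HasDerivAt (fun x => ux x y t) (uxx x y t) x
  deriv_uxx : ∀ x y t, HasDerivAt (fun x => uxx x y t) (uxxx x y t) x
  deriv_u_y : ∀ x y t, HasDerivAt (fun y => u x y t) (uy x y t) y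
  deriv_uy : ∀ x y t, HasDerivAt (fun y => uy x y t) (uyy x y t) y
  deriv_u_t : ∀ x y t, HasDerivAt (fun t => u x y t) (ut x y t) t
  left : ∀ y ∈ Set.Icc 0 L, ∀ t ≥ 0, u 0 y t = 0
  right : ∀ y ∈ Set.Icc 0 L, ∀ t ≥ 0, u L y t = 0
  slope : ∀ y ∈ Set.Icc 0 L, ∀ t ≥ 0, ux L y t = α * ux 0 y t
  top : ∀ x ∈ Set.Icc 0 L, ∀ t ≥ 0, uy x L t = β * ux x L t
  bottom : ∀ x ∈ Set.Icc 0 L, ∀ t ≥ 0, uy x 0 t = 0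
  eqn : ∀ x ∈ Set.Icc 0 L, ∀ y ∈ Set.Icc 0 L, ∀ t ≥ 0,
    ut x y t + (ux x y t + uxxx x y t + tailX L (fun s y => uyy s y t) x y) = 0

namespace KPFlow

open Function

variable {L α β : ℝ} (U : KPFlow L α β)

/-- The flow restarted at time `t₀`. -/
def shift (t₀ : ℝ) (ht₀ : 0 ≤ t₀) : KPFlow L α β where
  u x y t := U.u x y (t₀ + t)
  ux x y t := U.ux x y (t₀ + t)
  uxx x y t := U.uxx x y (t₀ + t)
  uxxx x y t := U.uxxx x y (t₀ + t)
  uy x y t := U.uy x y (t₀ + t)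
  uyy x y t := U.uyy x y (t₀ + t)
  ut x y t := U.ut x y (t₀ + t)
  cont_u := by have := U.cont_u; fun_prop
  cont_ux := by have := U.cont_ux; fun_prop
  cont_uxx := by have := U.cont_uxx; fun_prop
  cont_uxxx := by have := U.cont_uxxx; fun_prop
  cont_uy := by have := U.cont_uy; fun_prop
  cont_uyy := by have := U.cont_uyy; fun_prop
  cont_ut := by have := U.cont_ut; fun_prop
  deriv_u x y t := U.deriv_u x y _
  deriv_ux x y t := U.deriv_ux x y _
  deriv_uxx x y t := U.deriv_uxx x y _
  deriv_u_y x y t := U.deriv_u_y x y _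
  deriv_uy x y t := U.deriv_uy x y _
  deriv_u_t x y t := (U.deriv_u_t x y (t₀ + t)).comp_const_add t₀ t
  left y hy t ht := U.left y hy _ (add_nonneg ht₀ ht)
  right y hy t ht := U.right y hy _ (add_nonneg ht₀ ht)
  slope y hy t ht := U.slope y hy _ (add_nonneg ht₀ ht)
  top x hx t ht := U.top x hx _ (add_nonneg ht₀ ht)
  bottom x hx t ht := U.bottom x hx _ (add_nonneg ht₀ ht)
  eqn x hx y hy t ht := U.eqn x hx y hy _ (add_nonneg ht₀ ht)

/-- The spatial profile at time `t`. -/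
def slice (t : ℝ) (ht : 0 ≤ t) : KPProfile L α β where
  p x y := U.u x y t
  px x y := U.ux x y t
  pxx x y := U.uxx x y t
  pxxx x y := U.uxxx x y t
  py x y := U.uy x y t
  pyy x y := U.uyy x y t
  cont_p := by have := U.cont_u; fun_prop
  cont_px := by have := U.cont_ux; fun_prop
  cont_pxxx := by have := U.cont_uxxx; fun_prop
  cont_py := by have := U.cont_uy; fun_prop
  cont_pyy := by have := U.cont_uyy; fun_prop
  deriv_p x y := U.deriv_u x y t
  deriv_px x y := U.deriv_ux x y t
  deriv_pxx x y := U.deriv_uxx x y t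
  deriv_p_y x y := U.deriv_u_y x y t
  deriv_py x y := U.deriv_uy x y t
  left y hy := U.left y hy t ht
  right y hy := U.right y hy t ht
  slope y hy := U.slope y hy t ht
  top x hx := U.top x hx t ht
  bottom x hx := U.bottom x hx t ht

theorem hasDerivAt_average {c : ℝ → ℝ} (hc : Continuous c) {f f' : ℝ → ℝ → ℝ}
    (hf : Continuous (uncurry f)) (hf' : Continuous (uncurry f'))
    (h : ∀ x t, HasDerivAt (fun x => f x t) (f' x t) x) (T x : ℝ) :
    HasDerivAt (fun x => ∫ t in (0:ℝ)..T, c t * f x t) (∫ t in (0:ℝ)..T, c t * f' x t) x :=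
  hasDerivAt_intervalIntegral_param (f := fun x t => c t * f x t) (f' := fun x t => c t * f' x t)
    (by fun_prop) (by fun_prop) (fun x t => (h x t).const_mul (c t)) 0 T x

theorem integral_weight_congr {T : ℝ} (hT : 0 ≤ T) (c : ℝ → ℝ) {f g : ℝ → ℝ}
    (h : ∀ t ≥ 0, f t = g t) :
    ∫ t in (0:ℝ)..T, c t * f t = ∫ t in (0:ℝ)..T, c t * g t := by
  refine intervalIntegral.integral_congr fun t ht => ?_
  rw [Set.uIcc_of_le hT] at ht
  simp only [h t ht.1]

/-- The time average of the flow over `[0,T]` with weight `c`. -/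
def average {c : ℝ → ℝ} (hc : Continuous c) {T : ℝ} (hT : 0 ≤ T) : KPProfile L α β where
  p x y := ∫ t in (0:ℝ)..T, c t * U.u x y t
  px x y := ∫ t in (0:ℝ)..T, c t * U.ux x y t
  pxx x y := ∫ t in (0:ℝ)..T, c t * U.uxx x y t
  pxxx x y := ∫ t in (0:ℝ)..T, c t * U.uxxx x y t
  py x y := ∫ t in (0:ℝ)..T, c t * U.uy x y t
  pyy x y := ∫ t in (0:ℝ)..T, c t * U.uyy x y t
  cont_p := by have := U.cont_u; fun_prop
  cont_px := by have := U.cont_ux; fun_prop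
  cont_pxxx := by have := U.cont_uxxx; fun_prop
  cont_py := by have := U.cont_uy; fun_prop
  cont_pyy := by have := U.cont_uyy; fun_prop
  deriv_p x y := by
    have := U.cont_u
    have := U.cont_ux
    exact hasDerivAt_average hc (f := fun x t => U.u x y t) (f' := fun x t => U.ux x y t)
      (by fun_prop) (by fun_prop) (fun x t => U.deriv_u x y t) T x
  deriv_px x y := by
    have := U.cont_ux
    have := U.cont_uxx
    exact hasDerivAt_average hc (f := fun x t => U.ux x y t) (f' := fun x t => U.uxx x y t)
      (by fun_prop) (by fun_prop) (fun x t => U.deriv_ux x y t) T x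
  deriv_pxx x y := by
    have := U.cont_uxx
    have := U.cont_uxxx
    exact hasDerivAt_average hc (f := fun x t => U.uxx x y t) (f' := fun x t => U.uxxx x y t)
      (by fun_prop) (by fun_prop) (fun x t => U.deriv_uxx x y t) T x
  deriv_p_y x y := by
    have := U.cont_u
    have := U.cont_uy
    exact hasDerivAt_average hc (f := fun y t => U.u x y t) (f' := fun y t => U.uy x y t)
      (by fun_prop) (by fun_prop) (fun y t => U.deriv_u_y x y t) T y
  deriv_py x y := by
    have := U.cont_uy
    have := U.cont_uyy
    exact hasDerivAt_average hc (f := fun y t => U.uy x y t) (f' := fun y t => U.uyy x y t)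
      (by fun_prop) (by fun_prop) (fun y t => U.deriv_uy x y t) T y
  left y hy := by rw [integral_weight_congr hT c (U.left y hy)]; simp
  right y hy := by rw [integral_weight_congr hT c (U.right y hy)]; simp
  slope y hy := by
    rw [integral_weight_congr hT c (U.slope y hy), ← intervalIntegral.integral_const_mul]
    simp only [mul_left_comm]
  top x hx := by
    rw [integral_weight_congr hT c (U.top x hx), ← intervalIntegral.integral_const_mul]
    simp only [mul_left_comm]
  bottom x hx := by rw [integral_weight_congr hT c (U.bottom x hx)]; simp

theorem average_op {c c' : ℝ → ℝ} (hc : Continuous c) (hc' : Continuous c')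
    (h : ∀ t, HasDerivAt c (c' t) t) {T : ℝ} (hT : 0 ≤ T) (h0 : c 0 = 0) (h1 : c T = 0)
    {x y : ℝ} (hx : x ∈ Set.Icc 0 L) (hy : y ∈ Set.Icc 0 L) :
    (U.average hc hT).op x y = ∫ t in (0:ℝ)..T, c' t * U.u x y t := by
  have := U.cont_u
  have := U.cont_ux
  have := U.cont_uxxx
  have := U.cont_uyy
  have := U.cont_ut
  have prim : ∀ a, primX (fun x y => ∫ t in (0:ℝ)..T, c t * U.uyy x y t) a y
      = ∫ t in (0:ℝ)..T, c t * primX (fun s y => U.uyy s y t) a y := by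
    intro a
    unfold primX
    rw [intervalIntegral_swap_of_continuous (f := fun s t => c t * U.uyy s y t) (by fun_prop)]
    simp only [intervalIntegral.integral_const_mul]
  have tail : (U.average hc hT).zy x y
      = ∫ t in (0:ℝ)..T, c t * tailX L (fun s y => U.uyy s y t) x y := by
    change primX (fun x y => ∫ t in (0:ℝ)..T, c t * U.uyy x y t) x y
      - primX (fun x y => ∫ t in (0:ℝ)..T, c t * U.uyy x y t) L y = _
    rw [prim, prim, ← intervalIntegral.integral_sub
      (Continuous.intervalIntegrable (by unfold primX; fun_prop) _ _)
      (Continuous.intervalIntegrable (by unfold primX; fun_prop) _ _)]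
    simp only [tailX, mul_sub]
  have opEq : (U.average hc hT).op x y = ∫ t in (0:ℝ)..T, c t * -U.ut x y t := by
    rw [← integral_weight_congr hT c (f := fun t => U.ux x y t + U.uxxx x y t
      + tailX L (fun s y => U.uyy s y t) x y) fun t ht => by linarith [U.eqn x hx y hy t ht]]
    simp only [mul_add]
    rw [intervalIntegral.integral_add (Continuous.intervalIntegrable (by fun_prop) _ _)
      (Continuous.intervalIntegrable (by unfold tailX primX; fun_prop) _ _),
      intervalIntegral.integral_add (Continuous.intervalIntegrable (by fun_prop) _ _)
      (Continuous.intervalIntegrable (by fun_prop) _ _), ← tail]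
    rfl
  have ftc := intervalIntegral.integral_eq_sub_of_hasDerivAt
    (f := fun t => c t * U.u x y t) (fun t (_ : t ∈ Set.uIcc 0 T) => (h t).mul (U.deriv_u_t x y t))
    (Continuous.intervalIntegrable (by fun_prop) _ _)
  rw [h0, h1, intervalIntegral.integral_add (Continuous.intervalIntegrable (by fun_prop) _ _)
    (Continuous.intervalIntegrable (by fun_prop) _ _)] at ftc
  rw [opEq]
  simp only [mul_neg, intervalIntegral.integral_neg]
  linarith

/-- Twice the energy. -/
def mass (t : ℝ) : ℝ := squareInt L fun x y => U.u x y t ^ 2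

theorem continuous_mass : Continuous U.mass := by
  have := U.cont_u
  unfold mass squareInt
  fun_prop

theorem mass_nonneg (hL : 0 ≤ L) (t : ℝ) : 0 ≤ U.mass t :=
  squareInt_nonneg hL fun _ _ => sq_nonneg _

theorem hasDerivAt_mass (t : ℝ) :
    HasDerivAt U.mass (squareInt L fun x y => 2 * (U.u x y t * U.ut x y t)) t := by
  have := U.cont_u
  have := U.cont_ut
  refine hasDerivAt_intervalIntegral_param (f := fun t x => ∫ y in (0:ℝ)..L, U.u x y t ^ 2)
    (f' := fun t x => ∫ y in (0:ℝ)..L, 2 * (U.u x y t * U.ut x y t)) (by fun_prop) (by fun_prop)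
    (fun t x => ?_) 0 L t
  refine hasDerivAt_intervalIntegral_param (f := fun t y => U.u x y t ^ 2)
    (f' := fun t y => 2 * (U.u x y t * U.ut x y t)) (by fun_prop) (by fun_prop)
    (fun t y => ?_) 0 L t
  refine ((U.deriv_u_t x y t).pow 2).congr_deriv ?_
  simp
  ring

theorem mass_antitoneOn (hL : 0 ≤ L) (hα : |α| < 1) (hβ : 0 < β) :
    AntitoneOn U.mass (Set.Ici 0) := by
  have hα2 : α ^ 2 < 1 := (sq_lt_one_iff_abs_lt_one α).2 hα
  refine antitoneOn_of_deriv_nonpos (convex_Ici 0) U.continuous_mass.continuousOn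
    (fun t _ => (U.hasDerivAt_mass t).differentiableAt.differentiableWithinAt) fun t ht => ?_
  rw [interior_Ici] at ht
  rw [(U.hasDerivAt_mass t).deriv]
  set P := U.slice t ht.le
  have e : squareInt L (fun x y => 2 * (U.u x y t * U.ut x y t))
      = -2 * squareInt L fun x y => P.op x y * P.p x y := by
    rw [← squareInt_const_mul]
    refine squareInt_congr hL fun x hx y hy => ?_
    have : U.ut x y t + P.op x y = 0 := U.eqn x hx y hy t ht.le
    have : U.ut x y t = -P.op x y := by linarith
    rw [this, show P.p x y = U.u x y t from rfl]
    ring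
  rw [e, P.energy_identity hL]
  have h1 := mul_nonneg (by linarith : 0 ≤ (1 - α ^ 2) / 2) (P.slopeTrace_nonneg hL)
  have h2 := mul_nonneg hβ.le (P.topTrace_nonneg hL)
  linarith [P.fluxTrace_nonneg hL]

end KPFlow

open Function in
/-- Parseval's identity for a continuous real function on `[0,T]`. -/
theorem hasSum_sq_cos_add_sq_sin {g : ℝ → ℝ} (hg : Continuous g) {T : ℝ} (hT : 0 < T) :
    HasSum (fun n : ℤ => (∫ t in (0:ℝ)..T, g t * cos (2 * π * n / T * t)) ^ 2
        + (∫ t in (0:ℝ)..T, g t * sin (2 * π * n / T * t)) ^ 2)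
      (T * ∫ t in (0:ℝ)..T, g t ^ 2) := by
  set f : ℝ → ℂ := fun t => (g t : ℂ)
  have hf : Continuous f := by fun_prop
  have hmem : MemLp f 2 (volume.restrict (Set.Ioc 0 T)) :=
    (((memLp_top_of_bound hf.aestronglyMeasurable.restrict _
      ((ae_restrict_mem measurableSet_Ioc).mono fun t ht =>
        (isCompact_Icc.exists_bound_of_continuousOn hf.continuousOn).choose_spec t
          (Set.Ioc_subset_Icc_self ht)))).mono_exponent le_top)
  have key := (hasSum_sq_fourierCoeffOn hT hmem).mul_left (T ^ 2)
  have coeff : ∀ n : ℤ, fourierCoeffOn hT f n = ((1 / T : ℝ) : ℂ) *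
      (((∫ t in (0:ℝ)..T, g t * cos (2 * π * n / T * t) : ℝ) : ℂ)
        - ((∫ t in (0:ℝ)..T, g t * sin (2 * π * n / T * t) : ℝ) : ℂ) * Complex.I) := by
    intro n
    rw [fourierCoeffOn_eq_integral, ← intervalIntegral.integral_ofReal,
      ← intervalIntegral.integral_ofReal, ← intervalIntegral.integral_mul_const,
      ← intervalIntegral.integral_sub (Continuous.intervalIntegrable (by fun_prop) _ _)
      (Continuous.intervalIntegrable (by fun_prop) _ _), sub_zero, Complex.real_smul]
    congr 1
    refine intervalIntegral.integral_congr fun t _ => ?_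
    have : (2 * π * Complex.I * ((-n : ℤ) : ℂ) * t / (T : ℂ) : ℂ)
        = ((-(2 * π * n / T * t) : ℝ) : ℂ) * Complex.I := by push_cast; ring
    simp only [f, fourier_coe_apply, this, smul_eq_mul, Complex.exp_mul_I,
      ← Complex.ofReal_cos, ← Complex.ofReal_sin, cos_neg, sin_neg]
    push_cast
    ring
  have hterm : ∀ n : ℤ, T ^ 2 * ‖fourierCoeffOn hT f n‖ ^ 2
      = (∫ t in (0:ℝ)..T, g t * cos (2 * π * n / T * t)) ^ 2
        + (∫ t in (0:ℝ)..T, g t * sin (2 * π * n / T * t)) ^ 2 := fun n => by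
    rw [coeff, ← Complex.normSq_eq_norm_sq, map_mul, Complex.normSq_ofReal, sub_eq_add_neg,
      ← neg_mul, ← Complex.ofReal_neg, Complex.normSq_add_mul_I, neg_sq, ← mul_assoc,
      show T ^ 2 * (1 / T * (1 / T)) = 1 by field_simp, one_mul]
  have htotal : T ^ 2 * (T - 0)⁻¹ • ∫ t in (0:ℝ)..T, ‖f t‖ ^ 2
      = T * ∫ t in (0:ℝ)..T, g t ^ 2 := by
    simp only [f, Complex.norm_real, norm_eq_abs, sq_abs, sub_zero, smul_eq_mul]
    rw [← mul_assoc, show T ^ 2 * T⁻¹ = T by field_simp]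
  rw [htotal] at key
  simpa only [hterm] using key

namespace KPFlow

open Function

variable {L α β : ℝ} (U : KPFlow L α β)

theorem resolventPair_average {c c' : ℝ → ℝ} (hc : Continuous c) (hc' : Continuous c')
    (h : ∀ t, HasDerivAt c (c' t) t) {T : ℝ} (hT : 0 ≤ T) (h0 : c 0 = 0) (h1 : c T = 0) (ω : ℝ) :
    KPProfile.ResolventPair ω
      (U.average (c := fun t => c t * cos (ω * t)) (by fun_prop) hT)
      (U.average (c := fun t => c t * sin (ω * t)) (by fun_prop) hT)
      (fun x y => ∫ t in (0:ℝ)..T, c' t * U.u x y t * cos (ω * t))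
      (fun x y => ∫ t in (0:ℝ)..T, c' t * U.u x y t * sin (ω * t)) := by
  have := U.cont_u
  have hlin : ∀ t, HasDerivAt (fun t : ℝ => ω * t) ω t := fun t => by
    simpa using (hasDerivAt_id t).const_mul ω
  refine ⟨by fun_prop, by fun_prop, fun x hx y hy => ?_, fun x hx y hy => ?_⟩
  · rw [U.average_op (c' := fun t => c' t * cos (ω * t) + c t * (-sin (ω * t) * ω)) _
      (by fun_prop) (fun t => (h t).mul (hlin t).cos) hT (by simp [h0]) (by simp [h1]) hx hy]
    simp only [average]
    rw [← intervalIntegral.integral_const_mul, ← intervalIntegral.integral_sub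
      (Continuous.intervalIntegrable (by fun_prop) _ _)
      (Continuous.intervalIntegrable (by fun_prop) _ _)]
    congr 1; ext t; ring
  · rw [U.average_op (c' := fun t => c' t * sin (ω * t) + c t * (cos (ω * t) * ω)) _
      (by fun_prop) (fun t => (h t).mul (hlin t).sin) hT (by simp [h0]) (by simp [h1]) hx hy]
    simp only [average]
    rw [← intervalIntegral.integral_const_mul, ← intervalIntegral.integral_add
      (Continuous.intervalIntegrable (by fun_prop) _ _)
      (Continuous.intervalIntegrable (by fun_prop) _ _)]
    congr 1; ext t; ring

theorem hasSum_squareInt_fourier (hL : 0 ≤ L) {c : ℝ → ℝ} (hc : Continuous c) {T : ℝ}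
    (hT : 0 < T) :
    HasSum (fun n : ℤ => squareInt L fun x y =>
        (∫ t in (0:ℝ)..T, c t * U.u x y t * cos (2 * π * n / T * t)) ^ 2
        + (∫ t in (0:ℝ)..T, c t * U.u x y t * sin (2 * π * n / T * t)) ^ 2)
      (T * ∫ t in (0:ℝ)..T, c t ^ 2 * U.mass t) := by
  have := U.cont_u
  have e : T * ∫ t in (0:ℝ)..T, c t ^ 2 * U.mass t
      = squareInt L fun x y => T * ∫ t in (0:ℝ)..T, (c t * U.u x y t) ^ 2 := by
    rw [squareInt_const_mul, squareInt_intervalIntegral (f := fun x y t => (c t * U.u x y t) ^ 2)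
      (by fun_prop)]
    simp only [mass, mul_pow, squareInt_const_mul]
  rw [e]
  exact hasSum_squareInt hL (fun n => by fun_prop) (by fun_prop) (fun n x y => by positivity)
    fun x y => hasSum_sq_cos_add_sq_sin (by fun_prop) hT

theorem exists_integral_weight_le (hL : 0 < L) (hα : |α| < 1) (hβ : 0 < β) :
    ∃ C > 0, ∀ (U : KPFlow L α β) (c c' : ℝ → ℝ), Continuous c → Continuous c' →
      (∀ t, HasDerivAt c (c' t) t) → ∀ T > 0, c 0 = 0 → c T = 0 →
      ∫ t in (0:ℝ)..T, c t ^ 2 * U.mass t ≤ C * ∫ t in (0:ℝ)..T, c' t ^ 2 * U.mass t := by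
  obtain ⟨C, hC, hres⟩ := KPProfile.ResolventPair.exists_bound hL hα hβ
  refine ⟨C, hC, fun U c c' hc hc' h T hT h0 h1 => ?_⟩
  have := U.cont_u
  have hle := hasSum_le (fun n : ℤ => ?_) (U.hasSum_squareInt_fourier hL.le hc hT)
    ((U.hasSum_squareInt_fourier hL.le hc' hT).mul_left C)
  · rw [mul_left_comm] at hle
    exact le_of_mul_le_mul_left hle hT
  · have b := hres _ _ _ _ _ (U.resolventPair_average hc hc' h hT.le h0 h1 (2 * π * n / T))
    refine le_trans (le_of_eq ?_) b
    rw [squareInt_add (by fun_prop) (by fun_prop)]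
    simp only [KPProfile.mass, average, mul_right_comm]

theorem exists_mass_halving (hL : 0 < L) (hα : |α| < 1) (hβ : 0 < β) :
    ∃ T > 0, ∀ U : KPFlow L α β, U.mass T ≤ U.mass 0 / 2 := by
  obtain ⟨C, hC, hw⟩ := exists_integral_weight_le (L := L) (α := α) (β := β) hL hα hβ
  set T := 20 * C + 1
  have hT : 0 < T := by positivity
  refine ⟨T, hT, fun U => ?_⟩
  have hm := U.mass_antitoneOn hL.le hα hβ
  have hcm := U.continuous_mass
  have hpoly : ∀ t, HasDerivAt (fun t : ℝ => t * (T - t)) (T - 2 * t) t := fun t => by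
    refine ((hasDerivAt_id t).mul ((hasDerivAt_id t).const_sub T)).congr_deriv ?_
    simp; ring
  have key := hw U (fun t => t * (T - t)) (fun t => T - 2 * t) (by fun_prop) (by fun_prop) hpoly
    T hT (by simp) (by simp)
  have lower : U.mass T * (T ^ 5 / 30) ≤ ∫ t in (0:ℝ)..T, (t * (T - t)) ^ 2 * U.mass t := by
    have e : ∫ t in (0:ℝ)..T, (t * (T - t)) ^ 2 * U.mass T = U.mass T * (T ^ 5 / 30) := by
      rw [intervalIntegral.integral_eq_sub_of_hasDerivAt
        (f := fun t => (T ^ 2 * t ^ 3 / 3 - T * t ^ 4 / 2 + t ^ 5 / 5) * U.mass T)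
        (fun t _ => ?_) (Continuous.intervalIntegrable (by fun_prop) _ _)]
      · ring
      · refine HasDerivAt.mul_const ?_ _
        refine (((((hasDerivAt_id t).pow 3).const_mul (T ^ 2)).div_const 3).sub
          ((((hasDerivAt_id t).pow 4).const_mul T).div_const 2) |>.add
          (((hasDerivAt_id t).pow 5).div_const 5)).congr_deriv ?_
        simp; ring
    rw [← e]
    refine intervalIntegral.integral_mono_on hT.le (Continuous.intervalIntegrable (by fun_prop) _ _)
      (Continuous.intervalIntegrable (by fun_prop) _ _) fun t ht => ?_
    exact mul_le_mul_of_nonneg_left (hm ht.1 hT.le ht.2) (sq_nonneg _)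
  have upper : ∫ t in (0:ℝ)..T, (T - 2 * t) ^ 2 * U.mass t ≤ U.mass 0 * (T ^ 3 / 3) := by
    have e : ∫ t in (0:ℝ)..T, (T - 2 * t) ^ 2 * U.mass 0 = U.mass 0 * (T ^ 3 / 3) := by
      rw [intervalIntegral.integral_eq_sub_of_hasDerivAt
        (f := fun t => (T ^ 2 * t - 2 * T * t ^ 2 + 4 * t ^ 3 / 3) * U.mass 0)
        (fun t _ => ?_) (Continuous.intervalIntegrable (by fun_prop) _ _)]
      · ring
      · refine HasDerivAt.mul_const ?_ _
        refine ((((hasDerivAt_id t).const_mul (T ^ 2))).sub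
          (((hasDerivAt_id t).pow 2).const_mul (2 * T)) |>.add
          ((((hasDerivAt_id t).pow 3).const_mul 4).div_const 3)).congr_deriv ?_
        simp; ring
    rw [← e]
    refine intervalIntegral.integral_mono_on hT.le (Continuous.intervalIntegrable (by fun_prop) _ _)
      (Continuous.intervalIntegrable (by fun_prop) _ _) fun t ht => ?_
    exact mul_le_mul_of_nonneg_left (hm Set.self_mem_Ici ht.1 ht.1) (sq_nonneg _)
  have h0 := U.mass_nonneg hL.le 0
  have hTm := U.mass_nonneg hL.le T
  have chain : U.mass T * (T ^ 5 / 30) ≤ C * (U.mass 0 * (T ^ 3 / 3)) :=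
    lower.trans (key.trans (mul_le_mul_of_nonneg_left upper hC.le))
  have cancel : U.mass T * T ^ 2 ≤ 10 * C * U.mass 0 := by
    have hT3 : 0 < T ^ 3 / 30 := by positivity
    refine le_of_mul_le_mul_right ?_ hT3
    linarith
  have hT2 : 20 * C ≤ T ^ 2 := by nlinarith
  have : U.mass T * (20 * C) ≤ 10 * C * U.mass 0 :=
    (mul_le_mul_of_nonneg_left hT2 hTm).trans cancel
  refine le_of_mul_le_mul_left ?_ (by positivity : 0 < 20 * C)
  linarith

theorem exists_mass_decay (hL : 0 < L) (hα : |α| < 1) (hβ : 0 < β) :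
    ∃ θ > 0, ∀ (U : KPFlow L α β), ∀ t ≥ 0, U.mass t ≤ 2 * U.mass 0 * exp (-2 * θ * t) := by
  obtain ⟨T, hT, half⟩ := exists_mass_halving (L := L) (α := α) (β := β) hL hα hβ
  refine ⟨log 2 / (2 * T), by positivity, fun U t ht => ?_⟩
  have iter : ∀ n : ℕ, U.mass (n * T) ≤ U.mass 0 * exp (-(n * log 2)) := by
    intro n
    induction n with
    | zero => simp
    | succ n ih =>
      have step := half (U.shift (n * T) (by positivity))
      have e : ∀ s, (U.shift (n * T) (by positivity)).mass s = U.mass (n * T + s) := fun _ => rfl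
      rw [e, e, add_zero] at step
      have e2 : exp (-((n + 1 : ℕ) * log 2)) = exp (-(n * log 2)) / 2 := by
        rw [show -(((n + 1 : ℕ) : ℝ) * log 2) = -(n * log 2) - log 2 by push_cast; ring, exp_sub,
          exp_log two_pos]
      rw [e2, show ((n + 1 : ℕ) : ℝ) * T = n * T + T by push_cast; ring]
      linarith
  set n := ⌊t / T⌋₊
  have h1 : n * T ≤ t := (le_div_iff₀ hT).1 (Nat.floor_le (by positivity))
  have h2 : t / T ≤ n + 1 := (Nat.lt_floor_add_one _).le
  have hle : exp (-(n * log 2)) ≤ 2 * exp (-2 * (log 2 / (2 * T)) * t) := by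
    have : 2 * exp (-2 * (log 2 / (2 * T)) * t) = exp (log 2 - t / T * log 2) := by
      rw [sub_eq_add_neg, exp_add, exp_log two_pos]
      congr 2
      field_simp
    rw [this, exp_le_exp]
    nlinarith [log_pos one_lt_two, mul_le_mul_of_nonneg_right h2 (log_pos one_lt_two).le]
  calc U.mass t ≤ U.mass (n * T) :=
        U.mass_antitoneOn hL.le hα hβ (by simp only [Set.mem_Ici]; positivity) ht h1
    _ ≤ U.mass 0 * exp (-(n * log 2)) := iter n
    _ ≤ U.mass 0 * (2 * exp (-2 * (log 2 / (2 * T)) * t)) :=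
        mul_le_mul_of_nonneg_left hle (U.mass_nonneg hL.le 0)
    _ = _ := by ring

end KPFlow

section Regularity

variable {V : ℝ × ℝ × ℝ → ℝ}

theorem hasDerivAt_fderiv_fst (hV : Differentiable ℝ V) (x y t : ℝ) :
    HasDerivAt (fun x => V (x, y, t)) (fderiv ℝ V (x, y, t) (1, 0, 0)) x :=
  (hV (x, y, t)).hasFDerivAt.comp_hasDerivAt x
    ((hasDerivAt_id x).prodMk (hasDerivAt_const x (y, t)))

theorem hasDerivAt_fderiv_snd (hV : Differentiable ℝ V) (x y t : ℝ) :
    HasDerivAt (fun y => V (x, y, t)) (fderiv ℝ V (x, y, t) (0, 1, 0)) y :=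
  (hV (x, y, t)).hasFDerivAt.comp_hasDerivAt y
    ((hasDerivAt_const y x).prodMk ((hasDerivAt_id y).prodMk (hasDerivAt_const y t)))

theorem hasDerivAt_fderiv_trd (hV : Differentiable ℝ V) (x y t : ℝ) :
    HasDerivAt (fun t => V (x, y, t)) (fderiv ℝ V (x, y, t) (0, 0, 1)) t :=
  (hV (x, y, t)).hasFDerivAt.comp_hasDerivAt t
    ((hasDerivAt_const t x).prodMk ((hasDerivAt_const t y).prodMk (hasDerivAt_id t)))

theorem contDiff_fderiv_apply {m n : WithTop ℕ∞} (hV : ContDiff ℝ n V) (hmn : m + 1 ≤ n)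
    (e : ℝ × ℝ × ℝ) : ContDiff ℝ m fun q => fderiv ℝ V q e :=
  (hV.fderiv_right hmn).clm_apply contDiff_const

end Regularity

/-- A classical solution satisfies the equation up to the boundary, hence defines a flow. -/
theorem IsKPSolutionInf.exists_flow {L α β : ℝ} (hL : 0 < L) {u : ℝ → ℝ → ℝ → ℝ}
    (hu : IsKPSolutionInf L α β u) : ∃ U : KPFlow L α β, U.u = u := by
  obtain ⟨hC, heq, hside, hends⟩ := hu
  set V : ℝ × ℝ × ℝ → ℝ := fun p => u p.1 p.2.1 p.2.2
  have h32 : (2 : WithTop ℕ∞) + 1 ≤ 3 := two_add_one_eq_three.le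
  have h21 : (1 : WithTop ℕ∞) + 1 ≤ 2 := one_add_one_eq_two.le
  have hx := contDiff_fderiv_apply hC h32 (1, 0, 0)
  have hxx := contDiff_fderiv_apply hx h21 (1, 0, 0)
  have hxxx := contDiff_fderiv_apply hxx (zero_add 1).le (1, 0, 0)
  have hy := contDiff_fderiv_apply hC h32 (0, 1, 0)
  have hyy := contDiff_fderiv_apply hy h21 (0, 1, 0)
  have ht := contDiff_fderiv_apply hC h32 (0, 0, 1)
  set Vx : ℝ × ℝ × ℝ → ℝ := fun q => fderiv ℝ V q (1, 0, 0)
  set Vxx : ℝ × ℝ × ℝ → ℝ := fun q => fderiv ℝ Vx q (1, 0, 0)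
  set Vxxx : ℝ × ℝ × ℝ → ℝ := fun q => fderiv ℝ Vxx q (1, 0, 0)
  set Vy : ℝ × ℝ × ℝ → ℝ := fun q => fderiv ℝ V q (0, 1, 0)
  set Vyy : ℝ × ℝ × ℝ → ℝ := fun q => fderiv ℝ Vy q (0, 1, 0)
  set Vt : ℝ × ℝ × ℝ → ℝ := fun q => fderiv ℝ V q (0, 0, 1)
  have dV : Differentiable ℝ V := hC.differentiable (by norm_num)
  have du : ∀ x y t, HasDerivAt (fun x => u x y t) (Vx (x, y, t)) x := hasDerivAt_fderiv_fst dV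
  have dux : ∀ x y t, HasDerivAt (fun x => Vx (x, y, t)) (Vxx (x, y, t)) x :=
    hasDerivAt_fderiv_fst (hx.differentiable (by norm_num))
  have duxx : ∀ x y t, HasDerivAt (fun x => Vxx (x, y, t)) (Vxxx (x, y, t)) x :=
    hasDerivAt_fderiv_fst (hxx.differentiable (by norm_num))
  have du_y : ∀ x y t, HasDerivAt (fun y => u x y t) (Vy (x, y, t)) y := hasDerivAt_fderiv_snd dV
  have duy : ∀ x y t, HasDerivAt (fun y => Vy (x, y, t)) (Vyy (x, y, t)) y :=
    hasDerivAt_fderiv_snd (hy.differentiable (by norm_num))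
  have du_t : ∀ x y t, HasDerivAt (fun t => u x y t) (Vt (x, y, t)) t := hasDerivAt_fderiv_trd dV
  have epdx : ∀ x y t, pdx u x y t = Vx (x, y, t) := fun x y t => (du x y t).deriv
  have epdy : ∀ x y t, pdy u x y t = Vy (x, y, t) := fun x y t => (du_y x y t).deriv
  have epdt : ∀ x y t, pdt u x y t = Vt (x, y, t) := fun x y t => (du_t x y t).deriv
  have epdx3 : ∀ x y t, pdx3 u x y t = Vxxx (x, y, t) := fun x y t => by
    have e1 : deriv (fun x => u x y t) = fun x => Vx (x, y, t) := funext fun x => (du x y t).deriv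
    have e2 : deriv (fun x => Vx (x, y, t)) = fun x => Vxx (x, y, t) :=
      funext fun x => (dux x y t).deriv
    rw [pdx3, iteratedDeriv_succ', iteratedDeriv_succ', iteratedDeriv_one, e1, e2]
    exact (duxx x y t).deriv
  have epdy2 : ∀ x y t, pdy2 u x y t = Vyy (x, y, t) := fun x y t => by
    have e1 : deriv (fun y => u x y t) = fun y => Vy (x, y, t) :=
      funext fun y => (du_y x y t).deriv
    rw [pdy2, iteratedDeriv_succ', iteratedDeriv_one, e1]
    exact (duy x y t).deriv
  have cV := hC.continuous
  have cx := hx.continuous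
  have cxx := hxx.continuous
  have cxxx := hxxx.continuous
  have cy := hy.continuous
  have cyy := hyy.continuous
  have ct := ht.continuous
  have hclosed : Set.EqOn (fun q : ℝ × ℝ × ℝ => Vt q + (Vx q + Vxxx q
      + tailX L (fun s y => Vyy (s, y, q.2.2)) q.1 q.2.1)) (fun _ => 0)
      (Set.Icc 0 L ×ˢ Set.Icc 0 L ×ˢ Set.Ici 0) := by
    rw [← closure_Ioo hL.ne, ← closure_Ioi, ← closure_prod_eq, ← closure_prod_eq]
    refine Set.EqOn.closure ?_ (by unfold tailX primX; fun_prop) continuous_const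
    rintro ⟨x, y, t⟩ ⟨hx, hy, ht⟩
    have e := heq x hx y hy t ht
    simp only [epdx, epdx3, epdt, epdy2, pxInv] at e
    have htail := tailX_eq_neg_integral (L := L) (f := fun s y => Vyy (s, y, t)) (by fun_prop) x y
    simp only at htail ⊢
    rw [htail]
    linarith
  exact ⟨{
    u := u
    ux := fun x y t => Vx (x, y, t)
    uxx := fun x y t => Vxx (x, y, t)
    uxxx := fun x y t => Vxxx (x, y, t)
    uy := fun x y t => Vy (x, y, t)
    uyy := fun x y t => Vyy (x, y, t)
    ut := fun x y t => Vt (x, y, t)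
    cont_u := cV
    cont_ux := cx
    cont_uxx := cxx
    cont_uxxx := cxxx
    cont_uy := cy
    cont_uyy := cyy
    cont_ut := ct
    deriv_u := du
    deriv_ux := dux
    deriv_uxx := duxx
    deriv_u_y := du_y
    deriv_uy := duy
    deriv_u_t := du_t
    left := fun y hy t ht => (hside y hy t ht).1
    right := fun y hy t ht => (hside y hy t ht).2.1
    slope := fun y hy t ht => by simpa only [epdx] using (hside y hy t ht).2.2
    top := fun x hx t ht => by simpa only [epdx, epdy] using (hends x hx t ht).1
    bottom := fun x hx t ht => by simpa only [epdy] using (hends x hx t ht).2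
    eqn := fun x hx y hy t ht => hclosed ⟨hx, hy, ht⟩ }, rfl⟩

/-- Global uniform exponential stabilization of the closed-loop linear KP-II system. -/
theorem kp_global_uniform_stabilization (L α β : ℝ) (hL : 0 < L)
    (hα0 : 0 < |α|) (hα1 : |α| < 1) (hβ : 0 < β) :
    ∃ κ > (0:ℝ), ∃ θ > (0:ℝ), ∀ u : ℝ → ℝ → ℝ → ℝ, IsKPSolutionInf L α β u →
      ∀ t > (0:ℝ), energy L u t ≤ κ * energy L u 0 * Real.exp (-2 * θ * t) := by
  obtain ⟨θ, hθ, decay⟩ := KPFlow.exists_mass_decay (L := L) (α := α) (β := β) hL hα1 hβ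
  refine ⟨2, two_pos, θ, hθ, fun u hu t ht => ?_⟩
  obtain ⟨U, rfl⟩ := hu.exists_flow hL
  have e : ∀ t, energy L U.u t = 1 / 2 * U.mass t := fun _ => rfl
  rw [e, e]
  linarith [decay U t ht.le]

end
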